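/- For every η > 0 and all positive integers d₁, d₂ there exist κ > 0 and a constant C = C(η, d₁, d₂) such that the following holds for every prime p. Let χ be a non-trivial multiplicative character modulo p, let P ∈ 𝔽_p(X) be a nonzero rational function whose numerator and denominator have degree at most d₁, and let Q ∈ 𝔽_p(X, Y) be a nonzero rational function whose numerator and denominator have total degree at most d₂. Then for all real K, M, N with p^{1/5 + η} ≤ K, M, N < p^{1/4 − η}, one has |∑_{1 ≤ k ≤ K} ∑_{1 ≤ m ≤ M} ∑_{1 ≤ n ≤ N} χ((k + m·n)·P(m)·Q(k, n))| ≤ C·K·M·N·p^{−κ}, where terms with m a pole or zero of P, or (k, n) a pole or zero of Q, are omitted from the sum. -/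

import Mathlib

/-!
Absorb the twists into weights `α m` and `β k n` of modulus at most `1`. Cauchy–Schwarz in `(k, n)`
removes `β`; shifting `k` by multiples `a * b` and pulling out `χ a` leaves, after opening the
square, the correlations `|∑ b, χ (u - b) * conj (χ (v - b))|` at the points
`u = (k + m₁ * n) / a`, `v = (k + m₂ * n) / a`. Hölder's inequality bounds their sum by their
`2 r`-th moment over all pairs `(u, v)` times a count of collisions between these points.

* The moment is small by the Weil bound for `∑ x, χ (f x)` with `f` split over `𝔽_p`. Stepanov's
  method bounds the corresponding sums over every extension `𝔽_{p ^ n}` by `O(p ^ (n / 2))`; these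
  are power sums of the inverse roots of the `L`-polynomial of `f`, so each inverse root has
  modulus at most `p ^ (1 / 2)`.
* As `K`, `M`, `N` are at most `p ^ (1 / 4)`, a collision modulo `p` is a collision between
  rationals, and those are counted with the divisor bound. The saving in the moment outweighs the
  count once `K`, `M`, `N` exceed `p ^ (1 / 5 + η)`.
-/

open Finset

namespace TrilinearCharSum

section HasseDeriv

open Polynomial

lemma pow_sub_dvd_hasseDeriv_pow {R : Type*} [CommSemiring R] (f : R[X]) (e u : ℕ) :
    f ^ (e - u) ∣ hasseDeriv u (f ^ e) := by
  induction e generalizing u with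
  | zero => simp
  | succ e ih =>
    rw [pow_succ, hasseDeriv_mul]
    refine dvd_sum fun ⟨i, j⟩ hij ↦ ?_
    rw [HasAntidiagonal.mem_antidiagonal] at hij
    rcases j.eq_zero_or_pos with rfl | hj
    · rw [hasseDeriv_zero']
      exact (pow_dvd_pow f (by grind)).trans (pow_succ f (e - i) ▸ mul_dvd_mul_right (ih i) f)
    · exact ((pow_dvd_pow f (by grind)).trans (ih i)).mul_right _

lemma exists_hasseDeriv_pow_eq {R : Type*} [CommSemiring R] [NoZeroDivisors R] {f : R[X]}
    (hf : f ≠ 0) {e u : ℕ} (hu : u ≤ e) :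
    ∃ g : R[X], hasseDeriv u (f ^ e) = f ^ (e - u) * g ∧ g.natDegree ≤ u * f.natDegree := by
  obtain ⟨g, hg⟩ := pow_sub_dvd_hasseDeriv_pow f e u
  refine ⟨g, hg, ?_⟩
  rcases eq_or_ne g 0 with rfl | hg0
  · simp
  have hdeg := natDegree_hasseDeriv_le (f ^ e) u
  rw [hg, natDegree_mul (pow_ne_zero _ hf) hg0, natDegree_pow, natDegree_pow] at hdeg
  have : e * f.natDegree = (e - u) * f.natDegree + u * f.natDegree := by
    rw [← add_mul, Nat.sub_add_cancel hu]
  lia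

lemma exists_linearMap_hasseDeriv_pow_mul {R : Type*} [CommSemiring R] [NoZeroDivisors R]
    {f : R[X]} (hf : f ≠ 0) {e k : ℕ} (hk : k ≤ e) :
    ∃ Φ : R[X] →ₗ[R] R[X], ∀ r, hasseDeriv k (f ^ e * r) = f ^ (e - k) * Φ r ∧
      (Φ r).natDegree ≤ r.natDegree + k * f.natDegree := by
  choose! g hg hgdeg using fun u (hu : u ≤ e) ↦ exists_hasseDeriv_pow_eq hf hu
  refine ⟨∑ ij ∈ antidiagonal k,
    LinearMap.mulLeft R (f ^ (k - ij.1) * g ij.1) ∘ₗ hasseDeriv ij.2, fun r ↦ ⟨?_, ?_⟩⟩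
  · simp only [hasseDeriv_mul, LinearMap.sum_apply, LinearMap.comp_apply,
      LinearMap.mulLeft_apply, mul_sum]
    refine sum_congr rfl fun ⟨i, j⟩ hij ↦ ?_
    rw [HasAntidiagonal.mem_antidiagonal] at hij
    rw [hg i (by lia), show e - i = (e - k) + (k - i) by lia, pow_add]
    ring
  · simp only [LinearMap.sum_apply, LinearMap.comp_apply, LinearMap.mulLeft_apply]
    refine natDegree_sum_le_of_forall_le _ _ fun ⟨i, j⟩ hij ↦ ?_
    rw [HasAntidiagonal.mem_antidiagonal] at hij
    calc (f ^ (k - i) * g i * hasseDeriv j r).natDegree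
        ≤ (k - i) * f.natDegree + i * f.natDegree + r.natDegree := by
          refine natDegree_mul_le.trans (add_le_add (natDegree_mul_le.trans (add_le_add ?_ ?_)) ?_)
          · exact natDegree_pow_le
          · exact hgdeg i (by lia)
          · exact (natDegree_hasseDeriv_le r j).trans (Nat.sub_le _ _)
      _ = r.natDegree + k * f.natDegree := by
          rw [← add_mul, show k - i + i = k by lia, add_comm]

lemma coeff_taylor_mul_X_pow_card {F : Type*} [Field F] [Fintype F] (A : F[X]) (x : F) (j : ℕ)
    {k : ℕ} (hk : k < Fintype.card F) :
    (taylor x (A * X ^ (Fintype.card F * j))).coeff k = x ^ j * (hasseDeriv k A).eval x := by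
  obtain ⟨p, _⟩ := CharP.exists F
  obtain ⟨n, hp, hn⟩ := FiniteField.card F p
  have := Fact.mk hp
  have htaylor : taylor x (X ^ (Fintype.card F * j) : F[X]) =
      (X ^ Fintype.card F + C x) ^ j := by
    rw [taylor_pow, taylor_X, pow_mul, hn, add_pow_char_pow, ← hn, ← C_pow,
      FiniteField.pow_card]
  obtain ⟨G, hG⟩ := sub_dvd_pow_sub_pow (X ^ Fintype.card F + C x : F[X]) (C x) j
  rw [add_sub_cancel_right] at hG
  rw [taylor_mul, htaylor, sub_eq_iff_eq_add.mp hG, mul_add, coeff_add, mul_left_comm,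
    coeff_X_pow_mul', if_neg hk.not_ge, ← C_pow, coeff_mul_C, taylor_coeff, zero_add, mul_comm]

end HasseDeriv

section Stepanov

open Polynomial

variable {F : Type*} [Field F]

lemma sum_X_pow_mul_ne_zero {ι : Type*} [Fintype ι] [LinearOrder ι] {w : ι → ℕ} {c : ℕ}
    (hw : ∀ ⦃i j⦄, i < j → w i + c ≤ w j) {u r : ι → F[X]} (hu : ∀ i, (u i).eval 0 ≠ 0)
    (hr : ∀ i, (r i).degree < c) (hr0 : r ≠ 0) : ∑ i, X ^ w i * (u i * r i) ≠ 0 := by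
  intro hsum
  obtain ⟨i₀, hi₀, hmin⟩ : ∃ i₀, r i₀ ≠ 0 ∧ ∀ i < i₀, r i = 0 := by
    obtain ⟨i, hi⟩ := Function.ne_iff.mp hr0
    obtain ⟨i₀, h⟩ := (Set.toFinite {i | r i ≠ 0}).exists_minimal ⟨i, hi⟩
    exact ⟨i₀, h.prop, fun i hi ↦ not_not.mp fun hne ↦ h.not_lt hne hi⟩
  rw [← add_sum_erase _ _ (mem_univ i₀)] at hsum
  have hrest : X ^ (w i₀ + c) ∣ ∑ i ∈ univ.erase i₀, X ^ w i * (u i * r i) := by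
    refine dvd_sum fun i hi ↦ ?_
    rcases (ne_of_mem_erase hi).lt_or_gt with hlt | hgt
    · simp [hmin i hlt]
    · exact (pow_dvd_pow X (hw hgt)).mul_right _
  have hlead : X ^ (w i₀ + c) ∣ X ^ w i₀ * (u i₀ * r i₀) :=
    (dvd_add_left hrest).mp (hsum ▸ dvd_zero _)
  rw [pow_add, mul_dvd_mul_iff_left (pow_ne_zero _ X_ne_zero)] at hlead
  have hcop : IsCoprime ((X : F[X]) ^ c) (u i₀) := by
    refine IsCoprime.pow_left ((prime_X (R := F)).irreducible.coprime_iff_not_dvd.mpr ?_)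
    rw [X_dvd_iff, coeff_zero_eq_eval_zero]
    exact hu i₀
  have := degree_le_of_dvd (hcop.dvd_of_dvd_mul_left hlead) hi₀
  rw [degree_X_pow] at this
  exact (hr i₀).not_ge this

/-- Stepanov's auxiliary polynomial
`∑_{i < d, j} f ^ (L + c * i) * r_{i,j} * X ^ (q * j)` with `q = d * c + 1`; the pair `(i, j)` is
encoded by the single index `t = i + d * j`. -/
noncomputable def stepanovPoly (f : F[X]) (d c L : ℕ) {T : ℕ} (r : Fin T → F[X]) : F[X] :=
  ∑ t : Fin T, f ^ (L + c * (t % d)) * r t * X ^ ((d * c + 1) * (t / d))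

lemma stepanovPoly_ne_zero {f : F[X]} (hf : f.rootMultiplicity 0 = 1) (d c L : ℕ) {T : ℕ}
    {r : Fin T → F[X]} (hr : ∀ t, (r t).degree < c) (hr0 : r ≠ 0) :
    stepanovPoly f d c L r ≠ 0 := by
  have hf0 : f ≠ 0 := by rintro rfl; simp at hf
  obtain ⟨h, hfh, hh⟩ := exists_eq_pow_rootMultiplicity_mul_and_not_dvd f hf0 0
  rw [hf, pow_one, C_0, sub_zero] at hfh
  rw [C_0, sub_zero, X_dvd_iff, coeff_zero_eq_eval_zero] at hh
  have hweight (t : ℕ) : c * (t % d) + (d * c + 1) * (t / d) = c * t + t / d := by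
    linear_combination c * Nat.mod_add_div t d
  have hfactor : stepanovPoly f d c L r =
      f ^ L * ∑ t : Fin T, X ^ (c * t + t / d : ℕ) * (h ^ (c * (t % d)) * r t) := by
    rw [stepanovPoly, mul_sum]
    refine sum_congr rfl fun t _ ↦ ?_
    rw [← hweight t, pow_add f, show f ^ (c * (t % d)) = (X * h) ^ (c * (t % d)) by rw [← hfh]]
    ring
  rw [hfactor]
  refine mul_ne_zero (pow_ne_zero _ hf0) (sum_X_pow_mul_ne_zero (fun i j hij ↦ ?_) ?_ hr hr0)
  · have hmul : c * (i + 1) ≤ c * j := Nat.mul_le_mul_left c hij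
    have hdiv : (i : ℕ) / d ≤ j / d := Nat.div_le_div_right hij.le
    lia
  · simp [hh]

lemma natDegree_stepanovPoly_le {f : F[X]} {d c J : ℕ} (hf : 0 < f.natDegree) (hd : 0 < d)
    (L : ℕ) {r : Fin (d * J) → F[X]} (hr : ∀ t, (r t).degree < c) :
    (stepanovPoly f d c L r).natDegree ≤
      L * f.natDegree + (d * c + 1) * f.natDegree + (d * c + 1) * J := by
  refine natDegree_sum_le_of_forall_le _ _ fun t _ ↦ ?_
  have hmod : c * (t % d + 1) ≤ c * d := Nat.mul_le_mul_left c (Nat.mod_lt _ hd)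
  have hdiv : (t : ℕ) / d ≤ J := (Nat.div_lt_of_lt_mul t.2).le
  have hrt : (r t).natDegree ≤ c :=
    natDegree_le_of_degree_le (hr t).le
  calc (f ^ (L + c * (t % d)) * r t * X ^ ((d * c + 1) * (t / d))).natDegree
      ≤ (L + c * (t % d)) * f.natDegree + c + (d * c + 1) * (t / d) := by
        refine natDegree_mul_le.trans (add_le_add (natDegree_mul_le.trans (add_le_add ?_ hrt)) ?_)
        · exact natDegree_pow_le
        · exact (natDegree_X_pow _).le
    _ ≤ (L + c * (t % d)) * f.natDegree + c * f.natDegree + (d * c + 1) * J := by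
        gcongr
        exact Nat.le_mul_of_pos_right c hf
    _ = L * f.natDegree + c * (t % d + 1) * f.natDegree + (d * c + 1) * J := by ring
    _ ≤ L * f.natDegree + (d * c + 1) * f.natDegree + (d * c + 1) * J := by
        gcongr
        lia

lemma exists_ne_zero_forall_apply_eq_zero {ι V : Type*} [Fintype ι] [AddCommGroup V] [Module F V]
    [FiniteDimensional F V] {N : ℕ} (Ψ : ι → V →ₗ[F] F[X]) (hΨ : ∀ k v, Ψ k v ∈ degreeLT F N)
    (hlt : Fintype.card ι * N < Module.finrank F V) : ∃ v ≠ 0, ∀ k, Ψ k v = 0 := by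
  have hfin : FiniteDimensional F (degreeLT F N) := (degreeLTEquiv F N).symm.finiteDimensional
  have hker : LinearMap.ker (LinearMap.pi fun k ↦ (Ψ k).codRestrict _ (hΨ k)) ≠ ⊥ := by
    refine LinearMap.ker_ne_bot_of_finrank_lt ?_
    simpa [Module.finrank_pi_fintype, (degreeLTEquiv F N).finrank_eq] using hlt
  obtain ⟨v, hv, hv0⟩ := Submodule.exists_mem_ne_zero_of_ne_bot hker
  exact ⟨v, hv0, fun k ↦ congrArg Subtype.val (congrFun (LinearMap.mem_ker.mp hv) k)⟩

lemma coeff_taylor_stepanovPoly [Fintype F] {f : F[X]} {d c L T k : ℕ}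
    (hcard : Fintype.card F = d * c + 1) (hk : k < L) (hL : L ≤ Fintype.card F) {r R : Fin T → F[X]}
    (hR : ∀ t : Fin T, hasseDeriv k (f ^ (L + c * (t % d)) * r t) =
      f ^ (L + c * (t % d) - k) * R t) {a x : F} (hx : f.eval x ^ c = a) :
    (taylor x (stepanovPoly f d c L r)).coeff k = f.eval x ^ (L - k) *
      (∑ t : Fin T, C (a ^ (t % d : ℕ)) * X ^ (t / d : ℕ) * R t).eval x := by
  simp only [stepanovPoly, map_sum, finsetSum_coeff, eval_finsetSum, mul_sum, ← hcard]
  refine sum_congr rfl fun t _ ↦ ?_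
  rw [coeff_taylor_mul_X_pow_card _ _ _ (hk.trans_le hL), hR, ← hx,
    Nat.sub_add_comm hk.le]
  simp only [eval_mul, eval_pow, eval_C, eval_X]
  ring

lemma exists_pow_dvd_stepanovPoly [Fintype F] {f : F[X]} (hf : f ≠ 0) {d c J L : ℕ}
    (hcard : Fintype.card F = d * c + 1) (hL : L ≤ Fintype.card F)
    (hparam : L * (c + J + f.natDegree * L) < d * J * c) (a : F) :
    ∃ r : Fin (d * J) → F[X], r ≠ 0 ∧ (∀ t, (r t).degree < c) ∧
      ∀ x, f.eval x ^ c = a → (X - C x) ^ L ∣ stepanovPoly f d c L r := by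
  choose Φ hΦ hΦdeg using fun (k : Fin L) (t : Fin (d * J)) ↦
    exists_linearMap_hasseDeriv_pow_mul hf (k.2.le.trans (Nat.le_add_right L (c * (t % d))))
  let Ψ (k : Fin L) : (Fin (d * J) → degreeLT F c) →ₗ[F] F[X] :=
    ∑ t : Fin (d * J), LinearMap.mulLeft F (C (a ^ (t % d : ℕ)) * X ^ (t / d : ℕ)) ∘ₗ
      Φ k t ∘ₗ (degreeLT F c).subtype ∘ₗ LinearMap.proj t
  have hΨ (k v) : Ψ k v = ∑ t : Fin (d * J),
      C (a ^ (t % d : ℕ)) * X ^ (t / d : ℕ) * Φ k t (v t) := by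
    simp [Ψ, mul_assoc]
  have hΨdeg (k v) : Ψ k v ∈ degreeLT F (c + J + f.natDegree * L) := by
    rw [hΨ]
    refine Submodule.sum_mem _ fun t _ ↦ mem_degreeLT.mpr ?_
    have hdiv : (t : ℕ) / d < J := Nat.div_lt_of_lt_mul t.2
    refine degree_le_natDegree.trans_lt (Nat.cast_lt.mpr ?_)
    calc (C (a ^ (t % d : ℕ)) * X ^ (t / d : ℕ) * Φ k t (v t)).natDegree
        ≤ t / d + (c + k * f.natDegree) := by
          refine natDegree_mul_le.trans (add_le_add (natDegree_C_mul_X_pow_le _ _) ?_)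
          exact (hΦdeg k t _).trans (add_le_add_left
            (natDegree_le_of_degree_le (mem_degreeLT.mp (v t).2).le) _)
      _ < J + (c + L * f.natDegree) := by
          refine add_lt_add_of_lt_of_le hdiv (add_le_add_right (Nat.mul_le_mul_right _ k.2.le) _)
      _ = c + J + f.natDegree * L := by ring
  obtain ⟨v, hv0, hv⟩ := exists_ne_zero_forall_apply_eq_zero Ψ hΨdeg (by
    simpa [Module.finrank_pi_fintype, (degreeLTEquiv F c).finrank_eq] using hparam)
  refine ⟨fun t ↦ v t, fun h ↦ hv0 (funext fun t ↦ Subtype.ext (congrFun h t)),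
    fun t ↦ mem_degreeLT.mp (v t).2, fun x hx ↦ ?_⟩
  rw [X_sub_C_pow_dvd_iff, ← taylor_apply, X_pow_dvd_iff]
  intro k hk
  rw [coeff_taylor_stepanovPoly hcard hk hL (fun t ↦ hΦ ⟨k, hk⟩ t (v t)) hx, ← hΨ ⟨k, hk⟩ v, hv,
    eval_zero, mul_zero]

/-- **Stepanov's method.** The auxiliary polynomial is nonzero, of degree about `q * J`, and
vanishes to order `L` at each solution. -/
theorem card_filter_eval_pow_eq_mul_le [Fintype F] [DecidableEq F] {f : F[X]}
    (hf : f.rootMultiplicity 0 = 1) {d c J L : ℕ} (hcard : Fintype.card F = d * c + 1)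
    (hd : 0 < d) (hL : L ≤ Fintype.card F)
    (hparam : L * (c + J + f.natDegree * L) < d * J * c) (a : F) :
    #{x | f.eval x ^ c = a} * L ≤
      L * f.natDegree + Fintype.card F * f.natDegree + Fintype.card F * J := by
  have hf0 : f ≠ 0 := by rintro rfl; simp at hf
  have hroot : f.IsRoot 0 := (rootMultiplicity_pos hf0).mp (by lia)
  have hfdeg : 0 < f.natDegree := natDegree_pos_iff_degree_pos.mpr (degree_pos_of_root hf0 hroot)
  obtain ⟨r, hr0, hr, hdvd⟩ := exists_pow_dvd_stepanovPoly hf0 hcard hL hparam a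
  have hprod : ∏ x with f.eval x ^ c = a, (X - C x) ^ L ∣ stepanovPoly f d c L r := by
    refine prod_dvd_of_coprime (fun x _ y _ hxy ↦ ?_) fun x hx ↦ hdvd x (mem_filter.mp hx).2
    exact (isCoprime_X_sub_C_of_isUnit_sub (sub_ne_zero.mpr hxy).isUnit).pow
  have hdeg := natDegree_le_of_dvd hprod (stepanovPoly_ne_zero hf d c L hr hr0)
  rw [natDegree_prod_of_monic _ _ fun x _ ↦ (monic_X_sub_C x).pow L] at hdeg
  simp only [natDegree_pow, natDegree_X_sub_C, mul_one, sum_const, smul_eq_mul] at hdeg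
  rw [hcard]
  exact hdeg.trans (natDegree_stepanovPoly_le hfdeg hd L hr)

end Stepanov

section NormCharSum

open Polynomial Filter Asymptotics

variable {p : ℕ} [Fact p.Prime]

noncomputable instance (n : ℕ) : Fintype (GaloisField p n) := Fintype.ofFinite _

lemma card_galoisField {n : ℕ} (hn : n ≠ 0) : Fintype.card (GaloisField p n) = p ^ n := by
  rw [← Nat.card_eq_fintype_card, GaloisField.card p n hn]

lemma norm_aeval_eq_iff {n c : ℕ} (hn : n ≠ 0) (hc : p ^ n = (p - 1) * c + 1) (f : (ZMod p)[X])
    (x : GaloisField p n) (a : ZMod p) : Algebra.norm (ZMod p) (aeval x f) = a ↔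
      (f.map (algebraMap (ZMod p) (GaloisField p n))).eval x ^ c = algebraMap _ _ a := by
  have hexp : (Nat.card (GaloisField p n) - 1) / (Nat.card (ZMod p) - 1) = c := by
    rw [GaloisField.card p n hn, Nat.card_zmod, hc, Nat.add_sub_cancel]
    exact Nat.mul_div_cancel_left _ (Nat.sub_pos_of_lt (Fact.out : p.Prime).one_lt)
  rw [← (algebraMap (ZMod p) (GaloisField p n)).injective.eq_iff,
    FiniteField.algebraMap_norm_eq_pow, hexp, eval_map_algebraMap]

lemma card_filter_norm_aeval_eq_mul_le {n c J L : ℕ} (hn : n ≠ 0) {f : (ZMod p)[X]}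
    (hf : f.rootMultiplicity 0 = 1) (hc : p ^ n = (p - 1) * c + 1) (hL : L ≤ p ^ n)
    (hparam : L * (c + J + f.natDegree * L) < (p - 1) * J * c) (a : ZMod p) :
    #{x : GaloisField p n | Algebra.norm (ZMod p) (aeval x f) = a} * L ≤
      L * f.natDegree + p ^ n * f.natDegree + p ^ n * J := by
  classical
  have hroot : (f.map (algebraMap (ZMod p) (GaloisField p n))).rootMultiplicity 0 = 1 := by
    rw [← hf, ← map_zero (algebraMap (ZMod p) (GaloisField p n)),
      ← eq_rootMultiplicity_map (algebraMap (ZMod p) (GaloisField p n)).injective]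
  have hcount := card_filter_eval_pow_eq_mul_le hroot (d := p - 1) (c := c) (J := J) (L := L)
    (by rw [card_galoisField hn, hc]) (Nat.sub_pos_of_lt (Fact.out : p.Prime).one_lt)
    (by rwa [card_galoisField hn]) (by rwa [natDegree_map]) (algebraMap _ _ a)
  rw [natDegree_map, card_galoisField hn] at hcount
  simpa only [norm_aeval_eq_iff hn hc] using hcount

lemma stepanov_parameters_lt {d c m J t L : ℕ} (hd : 0 < d) (hc : 0 < c) (hJ : J ^ 2 ≤ d * c + 1)
    (hL : L + t = d * J) (ht : 2 * d ^ 2 * (1 + m * d) < t) :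
    L * (c + J + m * L) < d * J * c := by
  have hquad : L * (J + m * L) < t * c :=
    calc L * (J + m * L) ≤ d * J * (J + m * (d * J)) := by gcongr <;> lia
      _ = d * (1 + m * d) * J ^ 2 := by ring
      _ ≤ d * (1 + m * d) * (2 * d * c) := by
        gcongr
        have : 0 < d * c := by positivity
        lia
      _ = 2 * d ^ 2 * (1 + m * d) * c := by ring
      _ < t * c := by gcongr
  calc L * (c + J + m * L) = L * c + L * (J + m * L) := by ring
    _ < L * c + t * c := by gcongr
    _ = d * J * c := by rw [← hL]; ring

lemma stepanov_count_le {N d m J t L s b : ℝ} (hd : 1 ≤ d) (hm : 0 ≤ m) (ht : 0 ≤ t) (hs : 1 ≤ s)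
    (hb : 0 ≤ b) (hJ : 0 < J) (hL : L + t = d * J) (htJ : 2 * t ≤ d * J) (hsJ : s ≤ J * b)
    (hN : N * L ≤ L * m + s ^ 2 * m + s ^ 2 * J) :
    N ≤ s ^ 2 / d + (m + 2 * b * (m + t)) * s := by
  have hLJ : J ≤ 2 * L := by nlinarith
  have hsL : s ≤ 2 * b * L := by nlinarith
  have hL0 : 0 < L := by linarith
  refine le_of_mul_le_mul_right (hN.trans ?_) hL0
  have hmain : s ^ 2 * J ≤ s ^ 2 / d * L + s ^ 2 * t :=
    calc s ^ 2 * J = s ^ 2 / d * L + s ^ 2 * t / d := by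
          rw [show L = d * J - t by linarith]
          field_simp
          ring
      _ ≤ s ^ 2 / d * L + s ^ 2 * t := by gcongr; exact div_le_self (by positivity) hd
  have herror : s ^ 2 * (m + t) ≤ 2 * b * (m + t) * s * L := by
    calc s ^ 2 * (m + t) = s * (m + t) * s := by ring
      _ ≤ s * (m + t) * (2 * b * L) := by gcongr
      _ = 2 * b * (m + t) * s * L := by ring
  have hroots : L * m ≤ m * s * L := by
    have : 0 ≤ m * L := by positivity
    nlinarith
  linarith

lemma sqrt_pow_le_pow_half_mul {b : ℕ} (hb : 0 < b) (n : ℕ) :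
    √(b : ℝ) ^ n ≤ (b : ℝ) ^ (n / 2) * b := by
  have h1 : 1 ≤ √(b : ℝ) := Real.one_le_sqrt.mpr (by exact_mod_cast hb)
  calc √(b : ℝ) ^ n ≤ √(b : ℝ) ^ (2 * (n / 2 + 1)) := pow_le_pow_right₀ h1 (by lia)
    _ = (b : ℝ) ^ (n / 2) * b := by rw [pow_mul, Real.sq_sqrt b.cast_nonneg, pow_succ]

lemma exists_stepanov_parameters {d : ℕ} (hd : 0 < d) (m : ℕ) :
    ∃ t : ℕ, ∀ᶠ n in atTop, ∃ c L : ℕ, (d + 1) ^ n = d * c + 1 ∧ L ≤ (d + 1) ^ n ∧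
      L + t = d * (d + 1) ^ (n / 2) ∧ 2 * t ≤ d * (d + 1) ^ (n / 2) ∧
      L * (c + (d + 1) ^ (n / 2) + m * L) < d * (d + 1) ^ (n / 2) * c := by
  set t := 2 * d ^ 2 * (1 + m * d) + 1
  have hlarge : ∀ᶠ n in atTop, 2 * t ≤ (d + 1) ^ (n / 2) :=
    ((tendsto_pow_atTop_atTop_of_one_lt (by lia)).comp
      (Nat.tendsto_div_const_atTop two_ne_zero)).eventually_ge_atTop _
  refine ⟨t, ?_⟩
  filter_upwards [hlarge, eventually_ge_atTop 2] with n ht hn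
  set J := (d + 1) ^ (n / 2) with hJ
  have hq : 1 < (d + 1) ^ n := Nat.one_lt_pow (by lia) (by lia)
  obtain ⟨c, hc⟩ : d ∣ (d + 1) ^ n - 1 := Nat.sub_one_dvd_pow_sub_one (d + 1) n
  have hc0 : 0 < c := Nat.pos_of_ne_zero fun h ↦ by subst h; lia
  have hqc : (d + 1) ^ n = d * c + 1 := by lia
  have hJq : J ^ 2 ≤ (d + 1) ^ n := by
    rw [hJ, ← pow_mul]
    exact Nat.pow_le_pow_right d.succ_pos (by lia)
  have hdJ : d * J ≤ (d + 1) ^ n :=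
    calc d * J ≤ (d + 1) ^ (n / 2 + 1) := by rw [pow_succ']; gcongr; lia
      _ ≤ (d + 1) ^ n := Nat.pow_le_pow_right d.succ_pos (by lia)
  have htJ : 2 * t ≤ d * J := ht.trans (Nat.le_mul_of_pos_left J hd)
  have hL : d * J - t + t = d * J := by lia
  exact ⟨c, d * J - t, hqc, by lia, hL, htJ,
    stepanov_parameters_lt hd hc0 (hqc ▸ hJq) hL (Nat.lt_succ_self _)⟩

lemma exists_card_filter_norm_aeval_eq_le {f : (ZMod p)[X]} (hf : f.rootMultiplicity 0 = 1) :
    ∃ C : ℝ, ∀ᶠ n in atTop, ∀ a : ZMod p,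
      (#{x : GaloisField p n | Algebra.norm (ZMod p) (aeval x f) = a} : ℝ) ≤
        p ^ n / (p - 1) + C * √p ^ n := by
  have hp := (Fact.out : p.Prime).one_lt
  obtain ⟨d, hdp⟩ : ∃ d, d + 1 = p := ⟨p - 1, by lia⟩
  obtain ⟨t, ht⟩ := exists_stepanov_parameters (d := d) (by lia) f.natDegree
  refine ⟨f.natDegree + 2 * p * (f.natDegree + t), ?_⟩
  filter_upwards [ht, eventually_ne_atTop 0] with n hn hn0 a
  rw [hdp] at hn
  obtain ⟨c, L, hc, hLq, hL, htJ, hparam⟩ := hn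
  have hpd : p - 1 = d := by lia
  have hcount := card_filter_norm_aeval_eq_mul_le (J := p ^ (n / 2)) hn0 hf
    (by rwa [hpd]) hLq (by rwa [hpd]) a
  have hs : 1 ≤ √(p : ℝ) ^ n :=
    one_le_pow₀ (Real.one_le_sqrt.mpr (by exact_mod_cast hp.le))
  have hsq : (√(p : ℝ) ^ n) ^ 2 = p ^ n := by
    rw [pow_right_comm, Real.sq_sqrt p.cast_nonneg]
  have hd : (p : ℝ) - 1 = d := by rw [← hdp]; simp
  rw [hd, ← hsq]
  exact stepanov_count_le (J := (p : ℝ) ^ (n / 2)) (L := L) (by exact_mod_cast (by lia : 1 ≤ d))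
    (by positivity) (by positivity) hs p.cast_nonneg (by have := hp.le; positivity)
    (by exact_mod_cast hL) (by exact_mod_cast htJ) (sqrt_pow_le_pow_half_mul (by lia) n)
    (by rw [hsq]; exact_mod_cast hcount)

lemma norm_sum_mulChar_comp_le {X : Type*} [Fintype X] {χ : MulChar (ZMod p) ℂ} (hχ : χ ≠ 1)
    (g : X → ZMod p) {E : ℝ} (hE : ∀ a, #{x | g x = a} ≤ E) :
    ‖∑ x, χ (g x)‖ ≤ (p - 1) * E - (Fintype.card X - #{x | g x = 0}) := by
  have hsum : ∑ x, χ (g x) = ∑ a, χ a * (#{x | g x = a} - E : ℝ) := by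
    simp only [Complex.ofReal_sub, mul_sub, sum_sub_distrib, ← sum_mul,
      MulChar.sum_eq_zero_of_ne_one hχ, zero_mul, sub_zero, ← sum_fiberwise univ g]
    refine sum_congr rfl fun a _ ↦ ?_
    rw [sum_congr rfl fun x hx ↦ by rw [(mem_filter.mp hx).2], sum_const, nsmul_eq_mul, mul_comm,
      Complex.ofReal_natCast]
  have htotal : ∑ a, (#{x | g x = a} : ℝ) = Fintype.card X := by
    exact_mod_cast (card_eq_sum_card_fiberwise fun x _ ↦ mem_coe.mpr (mem_univ (g x))).symm
  calc ‖∑ x, χ (g x)‖ = ‖∑ a ∈ univ.erase 0, χ a * (#{x | g x = a} - E : ℝ)‖ := by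
        rw [hsum, ← add_sum_erase _ _ (mem_univ 0), MulChar.map_zero, zero_mul, zero_add]
    _ ≤ ∑ a ∈ univ.erase 0, (E - #{x | g x = a}) := by
        refine norm_sum_le_of_le _ fun a _ ↦ ?_
        rw [norm_mul, Complex.norm_real, Real.norm_eq_abs, abs_sub_comm,
          abs_of_nonneg (sub_nonneg.mpr (hE a))]
        exact mul_le_of_le_one_left (sub_nonneg.mpr (hE a)) (DirichletCharacter.norm_le_one χ a)
    _ = (p - 1) * E - (Fintype.card X - #{x | g x = 0}) := by
        rw [sum_sub_distrib, sum_const, card_erase_of_mem (mem_univ _), card_univ, ZMod.card,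
          nsmul_eq_mul, Nat.cast_pred (Fact.out : p.Prime).pos, ← htotal,
          ← add_sum_erase _ _ (mem_univ 0)]
        ring

lemma card_filter_norm_aeval_eq_zero_le {f : (ZMod p)[X]} (hf : f ≠ 0) (n : ℕ) :
    #{x : GaloisField p n | Algebra.norm (ZMod p) (aeval x f) = 0} ≤ f.natDegree := by
  classical
  calc #{x : GaloisField p n | Algebra.norm (ZMod p) (aeval x f) = 0}
      ≤ #(f.aroots (GaloisField p n)).toFinset := by
        refine card_le_card fun x hx ↦ ?_
        rw [Multiset.mem_toFinset, mem_aroots]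
        exact ⟨hf, Algebra.norm_eq_zero_iff.mp (mem_filter.mp hx).2⟩
    _ ≤ f.natDegree := (Multiset.toFinset_card_le _).trans (card_roots_map_le_natDegree f)

theorem isBigO_sum_mulChar_norm_aeval {f : (ZMod p)[X]} (hf : f.rootMultiplicity 0 = 1)
    {χ : MulChar (ZMod p) ℂ} (hχ : χ ≠ 1) :
    (fun n ↦ ∑ x : GaloisField p n, χ (Algebra.norm (ZMod p) (aeval x f))) =O[atTop]
      fun n ↦ √p ^ n := by
  have hf0 : f ≠ 0 := by rintro rfl; simp at hf
  have hp : (1 : ℝ) < p := by exact_mod_cast (Fact.out : p.Prime).one_lt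
  obtain ⟨C, hC⟩ := exists_card_filter_norm_aeval_eq_le hf
  refine .of_bound ((p - 1) * C + f.natDegree) ?_
  filter_upwards [hC, eventually_ne_atTop 0] with n hn hn0
  have hsqrt : 1 ≤ √(p : ℝ) ^ n := one_le_pow₀ (Real.one_le_sqrt.mpr hp.le)
  have hzeros : (#{x : GaloisField p n | Algebra.norm (ZMod p) (aeval x f) = 0} : ℝ) ≤
      f.natDegree := by exact_mod_cast card_filter_norm_aeval_eq_zero_le hf0 n
  rw [Real.norm_of_nonneg (by positivity)]
  refine (norm_sum_mulChar_comp_le hχ _ hn).trans ?_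
  rw [card_galoisField hn0, Nat.cast_pow, mul_add, mul_div_cancel₀ _ (sub_pos.mpr hp).ne']
  have : (f.natDegree : ℝ) ≤ f.natDegree * √p ^ n := le_mul_of_one_le_right (by positivity) hsqrt
  linarith

end NormCharSum

section PowerSums

open Polynomial Asymptotics Filter

lemma sum_esymm_mul_sum_map_pow_eq_zero {R : Type*} [CommRing R] (s : Multiset R) (n : ℕ) :
    n * ((-1) ^ n * s.esymm n) + ∑ j ∈ Icc 1 n,
      (s.map (· ^ j)).sum * ((-1) ^ (n - j) * s.esymm (n - j)) = 0 := by
  classical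
  have hesymm (k : ℕ) : MvPolynomial.aeval (fun x : s ↦ x.1) (MvPolynomial.esymm s R k) =
      s.esymm k := by
    rw [MvPolynomial.aeval_esymm_eq_multiset_esymm, Multiset.map_univ_coe]
  have hpsum (k : ℕ) : MvPolynomial.aeval (fun x : s ↦ x.1) (MvPolynomial.psum s R k) =
      (s.map (· ^ k)).sum := by
    rw [MvPolynomial.psum, map_sum]
    simp only [map_pow, MvPolynomial.aeval_X]
    exact congrArg Multiset.sum (Multiset.map_univ s (· ^ k))
  have newton := congrArg (MvPolynomial.aeval fun x : s ↦ x.1)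
    (MvPolynomial.mul_esymm_eq_sum s R n)
  simp only [map_mul, map_sum, map_pow, map_neg, map_one, map_natCast, hesymm, hpsum] at newton
  have hreindex : ∑ a ∈ antidiagonal n with a.1 < n,
      (-1) ^ a.1 * s.esymm a.1 * (s.map (· ^ a.2)).sum =
      ∑ j ∈ Icc 1 n, (s.map (· ^ j)).sum * ((-1) ^ (n - j) * s.esymm (n - j)) := by
    refine sum_bij' (fun a _ ↦ a.2) (fun j _ ↦ (n - j, j)) ?_ ?_ ?_ ?_ ?_
    all_goals
      simp only [mem_filter, HasAntidiagonal.mem_antidiagonal, mem_Icc, Prod.forall, Prod.mk.injEq,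
        and_true, implies_true]
    · lia
    · lia
    · lia
    · rintro a b ⟨rfl, -⟩
      rw [Nat.add_sub_cancel_right, mul_comm]
  rw [mul_left_comm, newton, hreindex, pow_succ, ← mul_assoc, ← mul_assoc, ← mul_pow]
  simp

lemma eq_neg_of_newton_recursion {R : Type*} [CommRing R] {c S T : ℕ → R} (hc : c 0 = 1)
    (hS : ∀ n, n * c n = ∑ j ∈ Icc 1 n, S j * c (n - j))
    (hT : ∀ n, n * c n + ∑ j ∈ Icc 1 n, T j * c (n - j) = 0) {n : ℕ} (hn : n ≠ 0) :
    S n = -T n := by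
  induction n using Nat.strong_induction_on with | _ n ih
  have hsplit (U : ℕ → R) :
      ∑ j ∈ Icc 1 n, U j * c (n - j) = ∑ j ∈ Ico 1 n, U j * c (n - j) + U n := by
    rw [← Ico_insert_right (by lia), sum_insert right_notMem_Ico, Nat.sub_self, hc, mul_one,
      add_comm]
  have hlt : ∑ j ∈ Ico 1 n, S j * c (n - j) = -∑ j ∈ Ico 1 n, T j * c (n - j) := by
    rw [← sum_neg_distrib]
    refine sum_congr rfl fun j hj ↦ ?_
    rw [mem_Ico] at hj
    rw [ih j hj.2 (by lia), neg_mul]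
  have hSn := hS n
  have hTn := hT n
  rw [hsplit] at hSn hTn
  linear_combination hTn - hSn - hlt

lemma exists_multiset_esymm_eq {K : Type*} [Field K] [IsAlgClosed K] {c : ℕ → K} (hc : c 0 = 1)
    {m : ℕ} (hm : ∀ n, m < n → c n = 0) :
    ∃ s : Multiset K, s.card = m ∧ ∀ n, (-1) ^ n * s.esymm n = c n := by
  set f : K[X] := X ^ m + ∑ i : Fin m, C (c (m - i)) * X ^ (i : ℕ)
  have hdeg : (∑ i : Fin m, C (c (m - i)) * X ^ (i : ℕ)).degree < (m : WithBot ℕ) :=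
    degree_sum_fin_lt fun i : Fin m ↦ c (m - i)
  have hf : f.Monic := monic_X_pow_add hdeg
  have hfdeg : f.natDegree = m := natDegree_eq_of_degree_eq_some
    ((degree_add_eq_left_of_degree_lt (by rwa [degree_X_pow])).trans (degree_X_pow m))
  have hroots : f.roots.card = f.natDegree := splits_iff_card_roots.mp (IsAlgClosed.splits f)
  have hcoeff (k : ℕ) (hk : k ≤ m) : f.coeff k = c (m - k) := by
    simp only [f, coeff_add, coeff_X_pow, finsetSum_coeff, coeff_C_mul]
    rw [Fin.sum_univ_eq_sum_range (fun i ↦ c (m - i) * if k = i then 1 else 0) m]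
    rcases hk.eq_or_lt with rfl | hk
    · rw [if_pos rfl, Nat.sub_self, hc, sum_eq_zero, add_zero]
      intro i hi
      rw [if_neg (mem_range.mp hi).ne', mul_zero]
    · simp [hk, hk.ne]
  refine ⟨f.roots, hroots.trans hfdeg, fun n ↦ ?_⟩
  rcases le_or_gt n m with hn | hn
  · have := coeff_eq_esymm_roots_of_card hroots (k := m - n) (by lia)
    rw [hf.leadingCoeff, one_mul, hfdeg, hcoeff _ (by lia), Nat.sub_sub_self hn] at this
    exact this.symm
  · rw [hm n hn, Multiset.esymm, Multiset.powersetCard_eq_empty _ (by rwa [hroots, hfdeg])]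
    simp

lemma sum_map_pow_mul_eval (s : Multiset ℂ) (f : ℂ[X]) (n : ℕ) :
    (s.map fun a ↦ a ^ n * f.eval a).sum = f.sum fun k b ↦ b * (s.map (· ^ (n + k))).sum := by
  simp only [eval_eq_sum, Polynomial.sum, mul_sum, Multiset.sum_map_sum,
    ← Multiset.sum_map_mul_left, pow_add, mul_left_comm]

/-- A polynomial vanishing on all other elements of `s` isolates `a ^ n` as a fixed linear
combination of consecutive power sums. -/
lemma norm_le_of_isBigO_sum_map_pow {s : Multiset ℂ} {R : ℝ} (hR : 0 ≤ R)
    (hs : (fun n ↦ (s.map (· ^ n)).sum) =O[atTop] fun n ↦ R ^ n) {a : ℂ} (ha : a ∈ s) :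
    ‖a‖ ≤ R := by
  classical
  set f : ℂ[X] := ∏ b ∈ s.toFinset.erase a, (X - C b)
  have hfa : s.count a * f.eval a ≠ 0 := by
    refine mul_ne_zero (by simpa using ha) ?_
    rw [eval_prod, prod_ne_zero_iff]
    intro b hb
    simpa [sub_eq_zero] using (ne_of_mem_erase hb).symm
  have hisolate (n : ℕ) : (s.map fun b ↦ b ^ n * f.eval b).sum =
      (s.count a * f.eval a) * a ^ n := by
    rw [sum_multiset_map_count, sum_eq_single_of_mem a (Multiset.mem_toFinset.mpr ha)]
    · rw [nsmul_eq_mul]; ring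
    · intro b hb hba
      have : f.eval b = 0 := by
        rw [eval_prod]
        exact prod_eq_zero (mem_erase.mpr ⟨hba, hb⟩) (by simp)
      simp [this]
  have hpow : (fun n ↦ (s.count a * f.eval a) * a ^ n) =O[atTop] fun n ↦ R ^ n := by
    simp only [← hisolate, sum_map_pow_mul_eval, Polynomial.sum]
    have hshift (k : ℕ) : (fun n ↦ R ^ (n + k)) =O[atTop] fun n ↦ R ^ n := by
      simp only [pow_add, mul_comm _ (R ^ k)]
      exact (isBigO_refl _ _).const_mul_left _
    exact IsBigO.fun_sum fun k _ ↦
      ((hs.comp_tendsto (tendsto_add_atTop_nat k)).trans (hshift k)).const_mul_left _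
  rw [isBigO_const_mul_left_iff hfa] at hpow
  by_contra! hlt
  have hlittle : (fun n ↦ a ^ n) =o[atTop] fun n ↦ a ^ n := by
    have := hpow.trans_isLittleO (isLittleO_pow_pow_of_lt_left hR hlt)
    simpa only [← norm_pow, isLittleO_norm_right] using this
  refine isLittleO_irrefl (Frequently.of_forall fun n ↦ pow_ne_zero n ?_) hlittle
  exact norm_pos_iff.mp (hR.trans_lt hlt)

lemma norm_one_le_of_newton_recursion {c S : ℕ → ℂ} (hc : c 0 = 1) {m : ℕ}
    (hm : ∀ n, m < n → c n = 0) (hS : ∀ n, n * c n = ∑ j ∈ Icc 1 n, S j * c (n - j)) {R : ℝ}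
    (hR : 0 ≤ R) (hbound : S =O[atTop] fun n ↦ R ^ n) : ‖S 1‖ ≤ m * R := by
  obtain ⟨s, hcard, hesymm⟩ := exists_multiset_esymm_eq hc hm
  have hpow {n : ℕ} (hn : n ≠ 0) : S n = -(s.map (· ^ n)).sum := by
    refine eq_neg_of_newton_recursion (T := fun n ↦ (s.map (· ^ n)).sum) hc hS (fun n ↦ ?_) hn
    simpa only [hesymm] using sum_esymm_mul_sum_map_pow_eq_zero s n
  have hsum : (fun n ↦ (s.map (· ^ n)).sum) =O[atTop] fun n ↦ R ^ n := by
    refine IsBigO.congr' hbound.neg_left ?_ .rfl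
    filter_upwards [eventually_ne_atTop 0] with n hn
    rw [hpow hn, neg_neg]
  rw [hpow one_ne_zero, norm_neg, ← hcard, ← nsmul_eq_mul]
  simp only [pow_one, Multiset.map_id']
  refine (norm_multiset_sum_le s).trans ?_
  rw [← Multiset.card_map (‖·‖) s]
  exact Multiset.sum_le_card_nsmul _ _ (by
    simpa using fun a ha ↦ norm_le_of_isBigO_sum_map_pow hR hsum ha)

end PowerSums

section ExtensionCharpoly

open Polynomial UniqueFactorizationMonoid

section Field

variable (K : Type*) {L : Type*} [Field K] [Field L] [Algebra K L]

/-- The characteristic polynomial over `K` of multiplication by `x` on the finite extension `L`,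
encoded as the appropriate power of the minimal polynomial of `x`. -/
noncomputable def extensionCharpoly (x : L) : K[X] :=
  minpoly K x ^ (Module.finrank K L / (minpoly K x).natDegree)

variable [FiniteDimensional K L] (x : L)

lemma monic_extensionCharpoly : (extensionCharpoly K x).Monic :=
  (minpoly.monic (Algebra.IsIntegral.isIntegral x)).pow _

lemma natDegree_extensionCharpoly :
    (extensionCharpoly K x).natDegree = Module.finrank K L := by
  rw [extensionCharpoly, natDegree_pow]
  exact Nat.div_mul_cancel (minpoly.degree_dvd (Algebra.IsIntegral.isIntegral x))

variable {K}

lemma norm_algebraMap_sub_powerBasis_gen (pb : PowerBasis K L) (c : K) :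
    Algebra.norm K (algebraMap K L c - pb.gen) = (minpoly K pb.gen).eval c := by
  rw [← charpoly_leftMulMatrix pb, Algebra.leftMulMatrix_apply, LinearMap.charpoly_toMatrix,
    LinearMap.eval_charpoly, Algebra.norm_apply, map_sub, AlgHom.commutes]

lemma eval_extensionCharpoly (c : K) :
    (extensionCharpoly K x).eval c = Algebra.norm K (algebraMap K L c - x) := by
  have hx : IsIntegral K x := Algebra.IsIntegral.isIntegral x
  set E := IntermediateField.adjoin K {x}
  have hE : Module.finrank K L / (minpoly K x).natDegree = Module.finrank E L := by
    rw [← IntermediateField.adjoin.finrank hx, ← Module.finrank_mul_finrank K E L,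
      Nat.mul_div_cancel_left _ Module.finrank_pos]
  have hgen : algebraMap K L c - x =
      algebraMap E L (algebraMap K E c - (IntermediateField.adjoin.powerBasis hx).gen) := by
    simp
  rw [← Algebra.norm_norm (S := E), hgen, Algebra.norm_algebraMap, map_pow,
    norm_algebraMap_sub_powerBasis_gen, extensionCharpoly, eval_pow, hE,
    IntermediateField.adjoin.powerBasis_gen, IntermediateField.minpoly_gen]

end Field

variable {K L : Type*} [Field K] [DecidableEq K] [Field L] [Algebra K L] [Fintype L]

lemma card_filter_minpoly_eq {P : K[X]} (hP : P.Monic) (hi : Irreducible P) :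
    #{x : L | minpoly K x = P} =
      if P.natDegree ∣ Module.finrank K L then P.natDegree else 0 := by
  classical
  split_ifs with h
  · have := Finite.of_injective _ (algebraMap K L).injective
    have := Fact.mk hi
    have hfinrank : Module.finrank K (AdjoinRoot P) = P.natDegree :=
      (AdjoinRoot.powerBasis hi.ne_zero).finrank
    have := (AdjoinRoot.powerBasis hi.ne_zero).finite
    rw [← hfinrank] at h ⊢
    rw [← FiniteField.natCard_algHom_of_finrank_dvd h,
      Nat.card_congr (AdjoinRoot.equiv L K P hi.ne_zero), Nat.card_eq_fintype_card,
      Fintype.card_subtype]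
    congr! 2 with x
    rw [mem_aroots, and_iff_right hi.ne_zero]
    exact ⟨fun hx ↦ hx ▸ minpoly.aeval K x,
      fun hx ↦ (minpoly.eq_of_irreducible_of_monic hi hx hP).symm⟩
  · rw [card_eq_zero, filter_eq_empty_iff]
    rintro x - rfl
    exact h (minpoly.degree_dvd (Algebra.IsIntegral.isIntegral x))

lemma pow_dvd_iff_le_count_normalizedFactors {P g : K[X]} (hP : P.Monic) (hi : Irreducible P)
    (hg : g ≠ 0) (t : ℕ) : P ^ t ∣ g ↔ t ≤ (normalizedFactors g).count P := by
  rw [pow_dvd_iff_le_emultiplicity, emultiplicity_eq_count_normalizedFactors hi hg,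
    hP.normalize_eq_self, Nat.cast_le]

lemma monic_of_mem_normalizedFactors {g P : K[X]} (hP : P ∈ normalizedFactors g) : P.Monic := by
  rw [← normalize_normalized_factor P hP]
  exact monic_normalize (irreducible_of_normalized_factor P hP).ne_zero

lemma sum_count_normalizedFactors_mul_natDegree {g : K[X]} (hg : g.Monic) :
    ∑ P ∈ (normalizedFactors g).toFinset, (normalizedFactors g).count P * P.natDegree =
      g.natDegree := by
  conv_rhs => rw [← hg.normalize_eq_self, ← prod_normalizedFactors_eq hg.ne_zero,
    prod_multiset_count]
  rw [natDegree_prod_of_monic]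
  · simp only [natDegree_pow]
  · exact fun P hP ↦ (monic_of_mem_normalizedFactors (Multiset.mem_toFinset.mp hP)).pow _

open scoped Classical in
lemma card_filter_extensionCharpoly_dvd {g : K[X]} (hg : g ≠ 0) :
    #{x : L | extensionCharpoly K x ∣ g} = ∑ P ∈ (normalizedFactors g).toFinset,
      if P.natDegree ∣ Module.finrank K L ∧
          Module.finrank K L / P.natDegree ≤ (normalizedFactors g).count P
        then P.natDegree else 0 := by
  have hmaps : ∀ x ∈ ({x | extensionCharpoly K x ∣ g} : Finset L),
      minpoly K x ∈ (normalizedFactors g).toFinset := by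
    intro x hx
    have hxi : IsIntegral K x := Algebra.IsIntegral.isIntegral x
    have hpos : 0 < Module.finrank K L / (minpoly K x).natDegree :=
      Nat.div_pos (Nat.le_of_dvd Module.finrank_pos (minpoly.degree_dvd hxi))
        (minpoly.natDegree_pos hxi)
    rw [Multiset.mem_toFinset, ← Multiset.one_le_count_iff_mem,
      ← pow_dvd_iff_le_count_normalizedFactors (minpoly.monic hxi) (minpoly.irreducible hxi) hg]
    exact (pow_dvd_pow _ hpos).trans (mem_filter.mp hx).2
  rw [card_eq_sum_card_fiberwise hmaps]
  refine sum_congr rfl fun P hP ↦ ?_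
  rw [Multiset.mem_toFinset] at hP
  have hmonic := monic_of_mem_normalizedFactors hP
  have hirr := irreducible_of_normalized_factor P hP
  have hdvd : ∀ x : L, minpoly K x = P → (extensionCharpoly K x ∣ g ↔
      Module.finrank K L / P.natDegree ≤ (normalizedFactors g).count P) := by
    rintro x rfl
    exact pow_dvd_iff_le_count_normalizedFactors hmonic hirr hg _
  rw [filter_filter, filter_congr fun x _ ↦ and_congr_left (hdvd x), ite_and]
  by_cases hle : Module.finrank K L / P.natDegree ≤ (normalizedFactors g).count P
  · simp only [hle, true_and, if_true, card_filter_minpoly_eq hmonic hirr]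
  · simp [hle]

lemma card_filter_dvd_and_div_le {d k n : ℕ} (hd : 0 < d) (hkn : k * d ≤ n) :
    #{j ∈ Icc 1 n | d ∣ j ∧ j / d ≤ k} = k := by
  have : {j ∈ Icc 1 n | d ∣ j ∧ j / d ≤ k} = (Icc 1 k).image (d * ·) := by
    ext j
    simp only [mem_filter, mem_Icc, mem_image]
    constructor
    · rintro ⟨⟨hj, -⟩, ⟨t, rfl⟩, ht⟩
      exact ⟨t, ⟨Nat.pos_of_mul_pos_left hj, by rwa [Nat.mul_div_cancel_left _ hd] at ht⟩, rfl⟩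
    · rintro ⟨t, ⟨ht, htk⟩, rfl⟩
      exact ⟨⟨Nat.mul_pos hd ht, by nlinarith⟩, dvd_mul_right .., by
        rwa [Nat.mul_div_cancel_left _ hd]⟩
  rw [this, card_image_of_injective _ (mul_right_injective₀ hd.ne'), Nat.card_Icc,
    Nat.add_sub_cancel]

end ExtensionCharpoly

section CharacterOnPolynomials

open Polynomial UniqueFactorizationMonoid
variable {p : ℕ} [Fact p.Prime]

open scoped Classical in
/-- A logarithmic-derivative identity: an irreducible factor `P` of multiplicity `k` contributes
`deg P` at each of the `k` indices `j = deg P, 2 deg P, …, k deg P`. -/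
lemma sum_card_filter_extensionCharpoly_dvd {g : (ZMod p)[X]} (hg : g.Monic) :
    ∑ j ∈ Icc 1 g.natDegree, #{x : GaloisField p j | extensionCharpoly (ZMod p) x ∣ g} =
      g.natDegree := by
  rw [sum_congr rfl fun j _ ↦ card_filter_extensionCharpoly_dvd hg.ne_zero, sum_comm]
  conv_rhs => rw [← sum_count_normalizedFactors_mul_natDegree hg]
  refine sum_congr rfl fun P hP ↦ ?_
  have hle : (normalizedFactors g).count P * P.natDegree ≤ g.natDegree := by
    rw [← sum_count_normalizedFactors_mul_natDegree hg]
    exact single_le_sum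
      (f := fun P ↦ (normalizedFactors g).count P * P.natDegree) (fun _ _ ↦ Nat.zero_le _) hP
  have hpos := (irreducible_of_normalized_factor P (Multiset.mem_toFinset.mp hP)).natDegree_pos
  have hfinrank : ∀ j ∈ Icc 1 g.natDegree, Module.finrank (ZMod p) (GaloisField p j) = j :=
    fun j hj ↦ GaloisField.finrank p (Nat.one_le_iff_ne_zero.mp (mem_Icc.mp hj).1)
  rw [← sum_filter, sum_const, smul_eq_mul,
    filter_congr fun j hj ↦ by rw [hfinrank j hj], card_filter_dvd_and_div_le hpos hle]

variable (p) in
/-- The finite set of monic polynomials of degree `n` over `ZMod p`. -/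
noncomputable def monicsOfDegree (n : ℕ) : Finset (ZMod p)[X] :=
  have : Finite {g : (ZMod p)[X] | g.Monic ∧ g.natDegree = n} :=
    have := Module.finite_of_finite (ZMod p) (M := degreeLT (ZMod p) n)
    .of_equiv _ (monicEquivDegreeLT n).symm
  (Set.toFinite {g : (ZMod p)[X] | g.Monic ∧ g.natDegree = n}).toFinset

lemma mem_monicsOfDegree {n : ℕ} {g : (ZMod p)[X]} :
    g ∈ monicsOfDegree p n ↔ g.Monic ∧ g.natDegree = n := by
  simp [monicsOfDegree]

lemma monicsOfDegree_zero : monicsOfDegree p 0 = {1} := by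
  ext g
  rw [mem_monicsOfDegree, mem_singleton]
  exact ⟨fun hg ↦ hg.1.natDegree_eq_zero.mp hg.2, by rintro rfl; simp⟩

lemma sum_monicsOfDegree_filter_dvd (ψ : (ZMod p)[X] →* ℂ) {h : (ZMod p)[X]} (hh : h.Monic)
    {n : ℕ} (hn : h.natDegree ≤ n) [DecidablePred (h ∣ ·)] :
    ∑ g ∈ monicsOfDegree p n with h ∣ g, ψ g =
      ψ h * ∑ g ∈ monicsOfDegree p (n - h.natDegree), ψ g := by
  rw [mul_sum]
  symm
  refine sum_bij (fun g _ ↦ h * g) (fun g hg ↦ ?_) (fun _ _ _ _ ↦ mul_left_cancel₀ hh.ne_zero)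
    (fun g hg ↦ ?_) fun g _ ↦ (map_mul ψ h g).symm
  · rw [mem_monicsOfDegree] at hg
    rw [mem_filter, mem_monicsOfDegree, hh.natDegree_mul hg.1]
    exact ⟨⟨hh.mul hg.1, by lia⟩, dvd_mul_right ..⟩
  · rw [mem_filter, mem_monicsOfDegree] at hg
    obtain ⟨⟨hmonic, hdeg⟩, q, rfl⟩ := hg
    have hq : q.Monic := hh.of_mul_monic_left hmonic
    rw [hh.natDegree_mul hq] at hdeg
    exact ⟨q, mem_monicsOfDegree.mpr ⟨hq, by lia⟩, rfl⟩

lemma natCast_mul_sum_monicsOfDegree (ψ : (ZMod p)[X] →* ℂ) (n : ℕ) :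
    n * ∑ g ∈ monicsOfDegree p n, ψ g = ∑ j ∈ Icc 1 n,
      (∑ x : GaloisField p j, ψ (extensionCharpoly (ZMod p) x)) *
        ∑ g ∈ monicsOfDegree p (n - j), ψ g := by
  classical
  calc n * ∑ g ∈ monicsOfDegree p n, ψ g
      = ∑ g ∈ monicsOfDegree p n, ∑ j ∈ Icc 1 n, ∑ x : GaloisField p j,
          if extensionCharpoly (ZMod p) x ∣ g then ψ g else 0 := by
        rw [mul_sum]
        refine sum_congr rfl fun g hg ↦ ?_
        obtain ⟨hmonic, rfl⟩ := mem_monicsOfDegree.mp hg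
        simp only [← sum_filter, sum_const, nsmul_eq_mul, ← sum_mul, ← Nat.cast_sum,
          sum_card_filter_extensionCharpoly_dvd hmonic]
    _ = ∑ j ∈ Icc 1 n, ∑ x : GaloisField p j,
          ∑ g ∈ monicsOfDegree p n with extensionCharpoly (ZMod p) x ∣ g, ψ g := by
        rw [sum_comm]
        refine sum_congr rfl fun j _ ↦ ?_
        rw [sum_comm]
        simp only [sum_filter]
    _ = _ := by
        refine sum_congr rfl fun j hj ↦ ?_
        rw [mem_Icc] at hj
        rw [sum_mul]
        refine sum_congr rfl fun x _ ↦ ?_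
        have hdeg : (extensionCharpoly (ZMod p) x).natDegree = j := by
          rw [natDegree_extensionCharpoly, GaloisField.finrank p (by lia)]
        rw [sum_monicsOfDegree_filter_dvd ψ (monic_extensionCharpoly (ZMod p) x) (by lia), hdeg]

lemma sum_monicsOfDegree_one (ψ : (ZMod p)[X] → ℂ) :
    ∑ g ∈ monicsOfDegree p 1, ψ g = ∑ u, ψ (X - C u) := by
  symm
  refine sum_bij (fun u _ ↦ X - C u)
    (fun u _ ↦ mem_monicsOfDegree.mpr ⟨monic_X_sub_C u, natDegree_X_sub_C u⟩)
    (fun u _ v _ h ↦ C_injective (sub_right_injective h)) (fun g hg ↦ ?_) fun _ _ ↦ rfl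
  rw [mem_monicsOfDegree] at hg
  exact ⟨-g.coeff 0, mem_univ _, by rw [C_neg, sub_neg_eq_add, ← hg.1.eq_X_add_C hg.2]⟩

/-- The completely multiplicative function `g ↦ ∏ c ∈ s, χ (g(c)) ^ e c` on polynomials, whose
`L`-function controls the complete sum of `∏ c ∈ s, χ (c - u) ^ e c`. -/
noncomputable def evalCharacter (χ : MulChar (ZMod p) ℂ) (s : Finset (ZMod p)) (e : ZMod p → ℕ) :
    (ZMod p)[X] →* ℂ :=
  ∏ c ∈ s, (χ.toMonoidHom.comp (evalRingHom c).toMonoidHom) ^ e c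

variable {χ : MulChar (ZMod p) ℂ} {s : Finset (ZMod p)} {e : ZMod p → ℕ}

lemma evalCharacter_apply (g : (ZMod p)[X]) :
    evalCharacter χ s e g = ∏ c ∈ s, χ (g.eval c) ^ e c := by
  simp [evalCharacter, MonoidHom.finsetProd_apply]

lemma evalCharacter_extensionCharpoly {n : ℕ} (x : GaloisField p n) :
    evalCharacter χ s e (extensionCharpoly (ZMod p) x) =
      χ (Algebra.norm (ZMod p) (aeval x (∏ c ∈ s, (C c - X) ^ e c))) := by
  simp only [evalCharacter_apply, eval_extensionCharpoly, map_prod, map_pow, map_sub, aeval_C,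
    aeval_X]

lemma sum_mulChar_add_mul_eq_zero (hχ : χ ≠ 1) (a : ZMod p) {b : ZMod p} (hb : b ≠ 0) :
    ∑ t, χ (a + t * b) = 0 := by
  rw [← MulChar.sum_eq_zero_of_ne_one hχ]
  exact Fintype.sum_bijective _
    ((Equiv.mulRight₀ b hb).trans (Equiv.addLeft a)).bijective _ _ fun _ ↦ rfl

lemma add_mem_monicsOfDegree {n : ℕ} {g w : (ZMod p)[X]} (hg : g ∈ monicsOfDegree p n)
    (hw : w.natDegree < n) : g + w ∈ monicsOfDegree p n := by
  rw [mem_monicsOfDegree] at hg ⊢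
  have hlt : w.natDegree < g.natDegree := hw.trans_eq hg.2.symm
  exact ⟨hg.1.add_of_left (degree_lt_degree hlt),
    (natDegree_add_eq_left_of_natDegree_lt hlt).trans hg.2⟩

/-- Translating `g` by multiples of `∏ c ∈ s.erase 0, (X - c)` moves `g(0)` through all residues
and leaves the other values `g(c)` unchanged. -/
lemma sum_monicsOfDegree_evalCharacter_eq_zero (hχ : χ ≠ 1) (h0 : 0 ∈ s) (he : e 0 = 1) {n : ℕ}
    (hn : #s ≤ n) : ∑ g ∈ monicsOfDegree p n, evalCharacter χ s e g = 0 := by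
  set w : (ZMod p)[X] := ∏ c ∈ s.erase 0, (X - C c)
  have hdeg (t : ZMod p) : (C t * w).natDegree < n := by
    refine (natDegree_C_mul_le t w).trans_lt ?_
    rw [natDegree_prod_of_monic _ _ fun c _ ↦ monic_X_sub_C c]
    simp only [natDegree_X_sub_C, sum_const, smul_eq_mul, mul_one]
    exact (card_erase_lt_of_mem h0).trans_le hn
  have hw0 : w.eval 0 ≠ 0 := by
    rw [eval_prod, prod_ne_zero_iff]
    intro c hc
    simpa using ne_of_mem_erase hc
  have hwc {c : ZMod p} (hc : c ∈ s.erase 0) : w.eval c = 0 := by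
    rw [eval_prod]
    exact prod_eq_zero hc (by simp)
  have htranslate (t : ZMod p) : ∑ g ∈ monicsOfDegree p n, evalCharacter χ s e (g + C t * w) =
      ∑ g ∈ monicsOfDegree p n, evalCharacter χ s e g :=
    sum_nbij' (· + C t * w) (· + C (-t) * w) (fun _ hg ↦ add_mem_monicsOfDegree hg (hdeg t))
      (fun _ hg ↦ add_mem_monicsOfDegree hg (hdeg (-t))) (by simp) (by simp) fun _ _ ↦ rfl
  have hsplit (g : (ZMod p)[X]) (t : ZMod p) : evalCharacter χ s e (g + C t * w) =
      χ (g.eval 0 + t * w.eval 0) * ∏ c ∈ s.erase 0, χ (g.eval c) ^ e c := by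
    simp only [evalCharacter_apply, eval_add, eval_mul, eval_C]
    rw [← mul_prod_erase s _ h0, he, pow_one]
    congr 1
    refine prod_congr rfl fun c hc ↦ ?_
    rw [hwc hc, mul_zero, add_zero]
  have havg : (p : ℂ) * ∑ g ∈ monicsOfDegree p n, evalCharacter χ s e g = 0 := by
    calc (p : ℂ) * ∑ g ∈ monicsOfDegree p n, evalCharacter χ s e g
        = ∑ t, ∑ g ∈ monicsOfDegree p n, evalCharacter χ s e (g + C t * w) := by
          simp only [htranslate, sum_const, card_univ, ZMod.card, nsmul_eq_mul]
      _ = 0 := by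
          rw [sum_comm]
          refine sum_eq_zero fun g _ ↦ ?_
          simp only [hsplit, ← sum_mul, sum_mulChar_add_mul_eq_zero hχ _ hw0, zero_mul]
  exact (mul_eq_zero.mp havg).resolve_left (by exact_mod_cast (Fact.out : p.Prime).ne_zero)

lemma rootMultiplicity_zero_prod_sub_pow (h0 : 0 ∈ s) (he : e 0 = 1) :
    (∏ c ∈ s, (C c - X) ^ e c : (ZMod p)[X]).rootMultiplicity 0 = 1 := by
  have hne : ∏ c ∈ s, (C c - X) ^ e c ≠ 0 := by
    simp only [prod_ne_zero_iff]
    intro c _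
    exact pow_ne_zero _ (sub_ne_zero.mpr (X_ne_C c).symm)
  have hroot : ¬ IsRoot (∏ c ∈ s.erase 0, (C c - X) ^ e c) (0 : ZMod p) := by
    rw [IsRoot, eval_prod, prod_eq_zero_iff]
    rintro ⟨c, hc, h⟩
    exact ne_of_mem_erase hc (by simpa using eq_zero_of_pow_eq_zero (by simpa using h))
  rw [← mul_prod_erase s _ h0, he, pow_one] at hne ⊢
  have hX : (C 0 - X : (ZMod p)[X]) = C (-1) * (X - C 0) := by simp
  rw [rootMultiplicity_mul hne, rootMultiplicity_eq_zero hroot, hX,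
    rootMultiplicity_mul (hX ▸ left_ne_zero_of_mul hne), rootMultiplicity_C,
    rootMultiplicity_X_sub_C_self]

theorem norm_sum_prod_mulChar_sub_le (hχ : χ ≠ 1) (h0 : 0 ∈ s) (he : e 0 = 1) :
    ‖∑ u, ∏ c ∈ s, χ (c - u) ^ e c‖ ≤ (#s - 1 : ℕ) * √p := by
  set ψ := evalCharacter χ s e
  have hbound : (fun n ↦ ∑ x : GaloisField p n, ψ (extensionCharpoly (ZMod p) x))
      =O[Filter.atTop] fun n ↦ √p ^ n := by
    simp only [ψ, evalCharacter_extensionCharpoly]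
    exact isBigO_sum_mulChar_norm_aeval (rootMultiplicity_zero_prod_sub_pow h0 he) hχ
  have hzero : ∑ g ∈ monicsOfDegree p 0, ψ g = 1 := by
    rw [monicsOfDegree_zero, sum_singleton, map_one]
  have hone := natCast_mul_sum_monicsOfDegree ψ 1
  simp only [Nat.cast_one, one_mul, Icc_self, sum_singleton, Nat.sub_self, hzero, mul_one,
    sum_monicsOfDegree_one] at hone
  have := norm_one_le_of_newton_recursion hzero (m := #s - 1)
    (fun n hn ↦ sum_monicsOfDegree_evalCharacter_eq_zero hχ h0 he (by lia))
    (natCast_mul_sum_monicsOfDegree ψ) (Real.sqrt_nonneg p) hbound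
  rw [← hone] at this
  simpa [ψ, evalCharacter_apply] using this

end CharacterOnPolynomials

section MomentBound

open scoped ComplexConjugate

lemma card_piFinset_filter_card_image_le {ι α : Type*} [Fintype ι] [DecidableEq ι] [Nonempty ι]
    [DecidableEq α] (S : Finset α) (r : ℕ) :
    #{f ∈ Fintype.piFinset fun _ : ι ↦ S | #(univ.image f) ≤ r} ≤
      r ^ Fintype.card ι * #S ^ r := by
  have hcard : #((univ : Finset (ι → Fin r)) ×ˢ Fintype.piFinset fun _ : Fin r ↦ S) =
      r ^ Fintype.card ι * #S ^ r := by simp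
  rw [← hcard]
  refine card_le_card_of_surjOn (fun x ↦ x.2 ∘ x.1) fun f hf ↦ ?_
  obtain ⟨hfS, hfr⟩ := mem_filter.mp hf
  rw [Fintype.mem_piFinset] at hfS
  obtain ⟨i₀⟩ := ‹Nonempty ι›
  set e := (univ.image f).equivFin
  have he (i : ι) : f i ∈ univ.image f := mem_image_of_mem f (mem_univ i)
  refine ⟨(fun i ↦ Fin.castLE hfr (e ⟨f i, he i⟩),
    fun j ↦ if h : j.1 < #(univ.image f) then e.symm ⟨j, h⟩ else f i₀), ?_, ?_⟩
  · rw [mem_coe, mem_product, Fintype.mem_piFinset]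
    refine ⟨mem_univ _, fun j ↦ ?_⟩
    dsimp only
    split_ifs with h
    · obtain ⟨i, -, hi⟩ := mem_image.mp (e.symm ⟨j, h⟩).2
      exact hi ▸ hfS i
    · exact hfS i₀
  · funext i
    simp

lemma two_mul_card_image_le {ι α : Type*} [Fintype ι] [DecidableEq α] {f : ι → α}
    (hf : ∀ i, ∃ j ≠ i, f j = f i) : 2 * #(univ.image f) ≤ Fintype.card ι := by
  rw [← card_univ, card_eq_sum_card_image f univ, mul_comm, ← smul_eq_mul]
  refine card_nsmul_le_sum _ _ _ fun a ha ↦ ?_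
  obtain ⟨i, -, rfl⟩ := mem_image.mp ha
  obtain ⟨j, hj, hji⟩ := hf i
  exact one_lt_card.mpr ⟨j, by simpa using hji, i, by simp, hj⟩

lemma exists_pow_apply_eq {F R : Type*} [CommRing F] [Finite Fˣ] [CommRing R] [IsDomain R]
    {χ ψ : MulChar F R} (h : ψ ∈ Subgroup.zpowers χ) :
    ∃ k, ∀ x, ψ x = χ x ^ k := by
  obtain ⟨k, rfl⟩ := mem_powers_iff_mem_zpowers.mpr h
  refine ⟨k + orderOf χ, fun x ↦ ?_⟩
  rw [← MulChar.pow_apply' χ (by have := χ.orderOf_pos; lia), pow_add, pow_orderOf_eq_one, mul_one]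

variable {p : ℕ}

/-- A family of `r` copies of `χ` and `r` copies of `χ⁻¹`, arising from the expansion of
`‖∑ b, χ (u - b)‖ ^ (2 * r)`. -/
noncomputable def balancedFamily (χ : MulChar (ZMod p) ℂ) (r : ℕ) :
    Fin r ⊕ Fin r → MulChar (ZMod p) ℂ :=
  Sum.elim (fun _ ↦ χ) fun _ ↦ χ⁻¹

lemma balancedFamily_mem_zpowers (χ : MulChar (ZMod p) ℂ) {r : ℕ} (i j : Fin r ⊕ Fin r) :
    balancedFamily χ r j ∈ Subgroup.zpowers (balancedFamily χ r i) := by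
  rcases i with _ | _ <;> rcases j with _ | _ <;> simp [balancedFamily]

lemma balancedFamily_ne_one {χ : MulChar (ZMod p) ℂ} (hχ : χ ≠ 1) {r : ℕ} (i : Fin r ⊕ Fin r) :
    balancedFamily χ r i ≠ 1 := by
  rcases i with _ | _
  exacts [hχ, inv_ne_one.mpr hχ]

variable [Fact p.Prime] {ι : Type*} [Fintype ι]

lemma norm_sum_prod_mulChar_pow_sub_le {χ : MulChar (ZMod p) ℂ} (hχ : χ ≠ 1) {b : ι → ZMod p}
    {k : ι → ℕ} {i₀ : ι} (hk : k i₀ = 1) (hb : ∀ i, b i = b i₀ → i = i₀) :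
    ‖∑ u, ∏ i, χ (u - b i) ^ k i‖ ≤ Fintype.card ι * √p := by
  classical
  set s := univ.image fun i ↦ b i₀ - b i
  set e : ZMod p → ℕ := fun c ↦ ∑ i with b i₀ - b i = c, k i
  have h0 : 0 ∈ s := mem_image.mpr ⟨i₀, mem_univ _, sub_self _⟩
  have he : e 0 = 1 := by
    have : ({i | b i₀ - b i = 0} : Finset ι) = {i₀} := by
      ext i
      simp only [mem_filter, mem_univ, true_and, mem_singleton, sub_eq_zero]
      exact ⟨fun h ↦ hb i h.symm, fun h ↦ h ▸ rfl⟩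
    simp only [e, this, sum_singleton, hk]
  have hreindex : ∑ u, ∏ i, χ (u - b i) ^ k i = ∑ v, ∏ c ∈ s, χ (c - v) ^ e c := by
    refine (Fintype.sum_bijective _ (Equiv.subLeft (b i₀)).bijective _ _ fun v ↦ ?_).symm
    rw [← prod_fiberwise_of_maps_to (fun i hi ↦ mem_image_of_mem (fun i ↦ b i₀ - b i) hi)]
    refine prod_congr rfl fun c _ ↦ ?_
    rw [← prod_pow_eq_pow_sum]
    refine prod_congr rfl fun i hi ↦ ?_
    rw [← (mem_filter.mp hi).2, Equiv.subLeft_apply, sub_right_comm]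
  rw [hreindex]
  refine (norm_sum_prod_mulChar_sub_le hχ h0 he).trans ?_
  gcongr
  exact (Nat.sub_le _ _).trans card_image_le

lemma norm_sum_prod_mulChar_sub_le_of_mem_zpowers {ψ : ι → MulChar (ZMod p) ℂ} {b : ι → ZMod p}
    {i₀ : ι} (hne : ψ i₀ ≠ 1) (hψ : ∀ i, ψ i ∈ Subgroup.zpowers (ψ i₀))
    (hb : ∀ i, b i = b i₀ → i = i₀) :
    ‖∑ u, ∏ i, ψ i (u - b i)‖ ≤ Fintype.card ι * √p := by
  have hpow (i : ι) : ∃ k, (i = i₀ → k = 1) ∧ ∀ x, ψ i x = ψ i₀ x ^ k := by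
    by_cases hi : i = i₀
    · exact ⟨1, fun _ ↦ rfl, by simp [hi]⟩
    · exact (exists_pow_apply_eq (hψ i)).imp fun k hk ↦ ⟨fun h ↦ absurd h hi, hk⟩
  choose k hk₀ hk using hpow
  calc ‖∑ u, ∏ i, ψ i (u - b i)‖ = ‖∑ u, ∏ i, ψ i₀ (u - b i) ^ k i‖ :=
        congrArg norm (sum_congr rfl fun u _ ↦ prod_congr rfl fun i _ ↦ hk i _)
    _ ≤ Fintype.card ι * √p := norm_sum_prod_mulChar_pow_sub_le hne (hk₀ i₀ rfl) hb

lemma norm_sum_prod_mulChar_le (ψ : ι → MulChar (ZMod p) ℂ) (b : ι → ZMod p) :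
    ‖∑ u, ∏ i, ψ i (u - b i)‖ ≤ p := by
  refine (norm_sum_le_of_le _ (n := fun _ ↦ 1) fun u _ ↦ ?_).trans (by simp [ZMod.card])
  rw [norm_prod]
  exact prod_le_one (fun _ _ ↦ norm_nonneg _) fun i _ ↦ DirichletCharacter.norm_le_one (ψ i) _

lemma norm_sum_mulChar_mul_conj_pow (χ : MulChar (ZMod p) ℂ) (B : Finset (ZMod p)) (r : ℕ)
    (u v : ZMod p) : (‖∑ b ∈ B, χ (u - b) * conj (χ (v - b))‖ ^ (2 * r) : ℂ) =
      ∑ b ∈ Fintype.piFinset fun _ : Fin r ⊕ Fin r ↦ B,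
        (∏ i, balancedFamily χ r i (u - b i)) * ∏ i, (balancedFamily χ r i)⁻¹ (v - b i) := by
  have hinv (x : ZMod p) : conj (χ x) = χ⁻¹ x := MulChar.star_apply' χ x
  simp only [← prod_mul_distrib]
  rw [← prod_univ_sum (fun _ : Fin r ⊕ Fin r ↦ B)
    fun i b ↦ balancedFamily χ r i (u - b) * (balancedFamily χ r i)⁻¹ (v - b)]
  simp only [Fintype.prod_sum_type, balancedFamily, Sum.elim_inl, Sum.elim_inr, inv_inv,
    prod_const, card_univ, Fintype.card_fin, ← mul_pow]
  have hconj : ∑ b ∈ B, χ⁻¹ (u - b) * χ (v - b) = conj (∑ b ∈ B, χ (u - b) * χ⁻¹ (v - b)) := by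
    simp [← hinv]
  rw [hconj, Complex.mul_conj, Complex.normSq_eq_norm_sq, Complex.ofReal_pow, ← pow_mul]
  simp only [hinv]

lemma sum_sum_norm_sum_mulChar_mul_conj_pow (χ : MulChar (ZMod p) ℂ) (B : Finset (ZMod p))
    (r : ℕ) :
    ((∑ u, ∑ v, ‖∑ b ∈ B, χ (u - b) * conj (χ (v - b))‖ ^ (2 * r) : ℝ) : ℂ) =
      ∑ b ∈ Fintype.piFinset fun _ : Fin r ⊕ Fin r ↦ B,
        (∑ u, ∏ i, balancedFamily χ r i (u - b i)) *
          ∑ v, ∏ i, (balancedFamily χ r i)⁻¹ (v - b i) := by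
  push_cast
  simp only [norm_sum_mulChar_mul_conj_pow, sum_mul_sum]
  calc _ = ∑ u, ∑ b ∈ Fintype.piFinset fun _ : Fin r ⊕ Fin r ↦ B, ∑ v,
        (∏ i, balancedFamily χ r i (u - b i)) * ∏ i, (balancedFamily χ r i)⁻¹ (v - b i) :=
      sum_congr rfl fun _ _ ↦ sum_comm
    _ = _ := sum_comm

lemma norm_sum_mul_sum_balancedFamily_le {χ : MulChar (ZMod p) ℂ} (hχ : χ ≠ 1) {r : ℕ}
    {b : Fin r ⊕ Fin r → ZMod p} {i₀ : Fin r ⊕ Fin r} (hb : ∀ i, b i = b i₀ → i = i₀) :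
    ‖(∑ u, ∏ i, balancedFamily χ r i (u - b i)) * ∑ v, ∏ i, (balancedFamily χ r i)⁻¹ (v - b i)‖ ≤
      (2 * r) ^ 2 * p := by
  have hcard : (Fintype.card (Fin r ⊕ Fin r) : ℝ) = 2 * r := by simp [two_mul]
  have hu := norm_sum_prod_mulChar_sub_le_of_mem_zpowers (balancedFamily_ne_one hχ i₀)
    (balancedFamily_mem_zpowers χ i₀) hb
  have hv := norm_sum_prod_mulChar_sub_le_of_mem_zpowers (ψ := fun i ↦ (balancedFamily χ r i)⁻¹)
    (inv_ne_one.mpr (balancedFamily_ne_one hχ i₀))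
    (fun i ↦ by simpa using balancedFamily_mem_zpowers χ i₀ i) hb
  rw [norm_mul]
  calc _ ≤ (2 * r * √p) * (2 * r * √p) := by rw [← hcard]; gcongr
    _ = (2 * r) ^ 2 * p := by rw [mul_mul_mul_comm, Real.mul_self_sqrt p.cast_nonneg, sq]

/-- Davenport–Erdős moment bound: only the tuples `b` in which every value is repeated, of which
there are few, escape square-root cancellation. -/
lemma sum_sum_norm_sum_mulChar_mul_conj_pow_le {χ : MulChar (ZMod p) ℂ} (hχ : χ ≠ 1)
    (B : Finset (ZMod p)) {r : ℕ} (hr : r ≠ 0) :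
    ∑ u, ∑ v, ‖∑ b ∈ B, χ (u - b) * conj (χ (v - b))‖ ^ (2 * r) ≤
      r ^ (2 * r) * #B ^ r * (p : ℝ) ^ 2 + (2 * r) ^ 2 * #B ^ (2 * r) * p := by
  have : NeZero r := ⟨hr⟩
  have hnonneg : 0 ≤ ∑ u, ∑ v, ‖∑ b ∈ B, χ (u - b) * conj (χ (v - b))‖ ^ (2 * r) := by positivity
  have hcard : Fintype.card (Fin r ⊕ Fin r) = 2 * r := by simp [two_mul]
  rw [← Complex.norm_of_nonneg hnonneg, sum_sum_norm_sum_mulChar_mul_conj_pow]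
  refine (norm_sum_le _ _).trans ?_
  rw [← sum_filter_add_sum_filter_not _ fun b : Fin r ⊕ Fin r → ZMod p ↦ ∀ i, ∃ j ≠ i, b j = b i]
  gcongr
  · refine (sum_le_card_nsmul _ _ ((p : ℝ) ^ 2) fun b _ ↦ ?_).trans ?_
    · rw [norm_mul, sq]
      exact mul_le_mul (norm_sum_prod_mulChar_le _ _)
        (norm_sum_prod_mulChar_le (fun i ↦ (balancedFamily χ r i)⁻¹) _) (norm_nonneg _)
        p.cast_nonneg
    · rw [nsmul_eq_mul]
      gcongr
      have hfew := card_piFinset_filter_card_image_le (ι := Fin r ⊕ Fin r) B r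
      rw [hcard] at hfew
      refine mod_cast (card_le_card (monotone_filter_right _ fun b _ hb ↦ ?_)).trans hfew
      have := two_mul_card_image_le hb
      lia
  · refine (sum_le_card_nsmul _ _ ((2 * r : ℝ) ^ 2 * p) fun b hb ↦ ?_).trans ?_
    · obtain ⟨i₀, hi₀⟩ := not_forall.mp (mem_filter.mp hb).2
      exact norm_sum_mul_sum_balancedFamily_le hχ fun i hi ↦ by_contra fun h ↦ hi₀ ⟨i, h, hi⟩
    · rw [nsmul_eq_mul, mul_right_comm, mul_comm]
      gcongr
      refine mod_cast (card_filter_le _ _).trans_eq ?_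
      simp [Fintype.card_piFinset, two_mul]

end MomentBound

section DivisorBound

lemma add_one_le_mul_two_rpow_pow {ε : ℝ} (hε : 0 < ε) (v : ℕ) :
    (v + 1 : ℝ) ≤ (1 + 1 / (ε * Real.log 2)) * ((2 : ℝ) ^ ε) ^ v := by
  set c := ε * Real.log 2
  have hc : 0 < c := mul_pos hε (Real.log_pos one_lt_two)
  calc (v + 1 : ℝ) ≤ (1 + 1 / c) * (v * c + 1) := by
        have : (1 + 1 / c) * (v * c + 1) = v * c + 1 / c + (v + 1) := by field_simp; ring
        rw [this, le_add_iff_nonneg_left]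
        positivity
    _ ≤ (1 + 1 / c) * Real.exp (v * c) := by gcongr; exact Real.add_one_le_exp _
    _ = (1 + 1 / c) * ((2 : ℝ) ^ ε) ^ v := by
        rw [Real.rpow_def_of_pos two_pos, ← Real.exp_nat_mul, mul_comm (Real.log 2)]

lemma rpow_eq_prod_primeFactors {n : ℕ} (hn : n ≠ 0) (ε : ℝ) :
    (n : ℝ) ^ ε = ∏ q ∈ n.primeFactors, ((q : ℝ) ^ ε) ^ n.factorization q := by
  conv_lhs => rw [← Nat.prod_factorization_pow_eq_self hn, Finsupp.prod, Nat.cast_prod]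
  rw [Nat.support_factorization, ← Real.finsetProd_rpow _ _ fun _ _ ↦ by positivity]
  refine prod_congr rfl fun q _ ↦ ?_
  rw [Nat.cast_pow, Real.rpow_pow_comm q.cast_nonneg]

lemma exists_card_divisors_le_mul_rpow {ε : ℝ} (hε : 0 < ε) :
    ∃ C : ℝ, 1 ≤ C ∧ ∀ n : ℕ, n ≠ 0 → (#n.divisors : ℝ) ≤ C * (n : ℝ) ^ ε := by
  set c : ℝ := 1 + 1 / (ε * Real.log 2)
  have hc : 1 ≤ c := le_add_of_nonneg_right (by positivity)
  set Q : ℕ := ⌈(2 : ℝ) ^ ε⁻¹⌉₊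
  refine ⟨c ^ Q, one_le_pow₀ hc, fun n hn ↦ ?_⟩
  have hfactor (q) (hq : q ∈ n.primeFactors) : (n.factorization q + 1 : ℝ) ≤
      (if q < Q then c else 1) * ((q : ℝ) ^ ε) ^ n.factorization q := by
    split_ifs with hqQ
    · refine (add_one_le_mul_two_rpow_pow hε _).trans ?_
      gcongr
      exact_mod_cast (Nat.prime_of_mem_primeFactors hq).two_le
    · have htwo : (2 : ℝ) ≤ (q : ℝ) ^ ε :=
        (Real.rpow_inv_le_iff_of_pos zero_le_two q.cast_nonneg hε).mp (Nat.ceil_le.mp (by lia))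
      calc (n.factorization q + 1 : ℝ) ≤ 2 ^ n.factorization q := mod_cast Nat.lt_two_pow_self
        _ ≤ 1 * ((q : ℝ) ^ ε) ^ n.factorization q := by rw [one_mul]; gcongr
  calc (#n.divisors : ℝ) = ∏ q ∈ n.primeFactors, (n.factorization q + 1 : ℝ) := by
        rw [Nat.card_divisors hn]; push_cast; rfl
    _ ≤ ∏ q ∈ n.primeFactors,
          (if q < Q then c else 1) * ((q : ℝ) ^ ε) ^ n.factorization q :=
        prod_le_prod (fun _ _ ↦ by positivity) hfactor
    _ = c ^ #{q ∈ n.primeFactors | q < Q} * (n : ℝ) ^ ε := by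
        rw [prod_mul_distrib, ← rpow_eq_prod_primeFactors hn, prod_ite, prod_const, prod_const_one,
          mul_one]
    _ ≤ c ^ Q * (n : ℝ) ^ ε := by
        gcongr
        refine (card_le_card fun q hq ↦ ?_).trans_eq (card_range Q)
        exact mem_range.mpr (mem_filter.mp hq).2

end DivisorBound

section Collisions

variable {ι Y : Type*} [DecidableEq Y]

lemma card_filter_apply_eq_apply {I : Finset ι} {Z : Finset Y} {φ : ι → Y}
    (hφ : ∀ i ∈ I, φ i ∈ Z) :
    #{x ∈ I ×ˢ I | φ x.1 = φ x.2} = ∑ y ∈ Z, #{i ∈ I | φ i = y} ^ 2 := by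
  classical
  rw [card_eq_sum_card_fiberwise (f := fun x ↦ φ x.1) (t := Z) fun x hx ↦
    hφ _ (mem_product.mp (mem_filter.mp hx).1).1]
  refine sum_congr rfl fun y _ ↦ ?_
  rw [sq, ← card_product]
  congr 1
  ext x
  simp only [mem_product, mem_filter]
  grind

lemma sum_comp_pow_le (I : Finset ι) [Fintype Y] (φ : ι → Y) {g : Y → ℝ} (hg : ∀ y, 0 ≤ g y)
    (s : ℕ) :
    (∑ i ∈ I, g (φ i)) ^ (2 * (s + 1)) ≤
      (#I : ℝ) ^ (2 * s) * #{x ∈ I ×ˢ I | φ x.1 = φ x.2} * ∑ y, g y ^ (2 * (s + 1)) := by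
  have hpower : (∑ i ∈ I, g (φ i)) ^ (s + 1) ≤ #I ^ s * ∑ i ∈ I, g (φ i) ^ (s + 1) := by
    rcases I.eq_empty_or_nonempty with rfl | hI
    · simp
    · have := pow_sum_div_card_le_sum_pow (s := I) (f := g ∘ φ) (fun i _ ↦ hg _) s
      rwa [div_le_iff₀' (by positivity)] at this
  have hfiber : ∑ i ∈ I, g (φ i) ^ (s + 1) = ∑ y, (#{i ∈ I | φ i = y} : ℝ) * g y ^ (s + 1) := by
    rw [← sum_fiberwise_of_maps_to fun i _ ↦ mem_univ (φ i)]
    refine sum_congr rfl fun y _ ↦ ?_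
    rw [sum_congr rfl fun i hi ↦ by rw [(mem_filter.mp hi).2], sum_const, nsmul_eq_mul]
  calc (∑ i ∈ I, g (φ i)) ^ (2 * (s + 1)) = ((∑ i ∈ I, g (φ i)) ^ (s + 1)) ^ 2 := by
        rw [mul_comm, pow_mul]
    _ ≤ (#I ^ s * ∑ i ∈ I, g (φ i) ^ (s + 1)) ^ 2 := by
        have := sum_nonneg fun i (_ : i ∈ I) ↦ hg (φ i)
        gcongr
    _ = (#I : ℝ) ^ (2 * s) * (∑ y, (#{i ∈ I | φ i = y} : ℝ) * g y ^ (s + 1)) ^ 2 := by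
        rw [hfiber, mul_pow, ← pow_mul, mul_comm s]
    _ ≤ (#I : ℝ) ^ (2 * s) *
          ((∑ y, (#{i ∈ I | φ i = y} : ℝ) ^ 2) * ∑ y, (g y ^ (s + 1)) ^ 2) := by
        gcongr
        exact sum_mul_sq_le_sq_mul_sq _ _ _
    _ = _ := by
        rw [card_filter_apply_eq_apply fun i _ ↦ mem_univ (φ i), ← mul_assoc]
        simp only [← pow_mul, mul_comm (s + 1), Nat.cast_sum, Nat.cast_pow]

end Collisions

section CollisionCount

/-- The quintuples `(a, k, n, m₁, m₂)` with `m₁ ≠ m₂` that index the off-diagonal terms after the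
variable `k` is shifted by multiples of `a`. -/
def shiftIndex (A L N M : ℕ) : Finset (ℕ × ℕ × ℕ × ℕ × ℕ) :=
  Icc 1 A ×ˢ Icc 1 L ×ˢ Icc 1 N ×ˢ (Icc 1 M).offDiag

/-- The pair of points `((k + m₁ n) / a, (k + m₂ n) / a)` attached to a quintuple
`(a, k, n, m₁, m₂)`; its multiplicities over `ZMod p` are compared with those over `ℚ`. -/
def shiftPoint (F : Type*) [Field F] : ℕ × ℕ × ℕ × ℕ × ℕ → F × F :=
  fun (a, k, n, m₁, m₂) ↦ ((k + m₁ * n) / a, (k + m₂ * n) / a)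

lemma mem_shiftIndex {A L N M a k n m₁ m₂ : ℕ} : (a, k, n, m₁, m₂) ∈ shiftIndex A L N M ↔
    (0 < a ∧ a ≤ A) ∧ (0 < k ∧ k ≤ L) ∧ (0 < n ∧ n ≤ N) ∧ (0 < m₁ ∧ m₁ ≤ M) ∧ (0 < m₂ ∧ m₂ ≤ M) ∧
      m₁ ≠ m₂ := by
  simp [shiftIndex, Nat.succ_le_iff]

lemma card_shiftIndex_le (A L N M : ℕ) : #(shiftIndex A L N M) ≤ A * L * N * M ^ 2 := by
  simp only [shiftIndex, card_product, offDiag_card, Nat.card_Icc, Nat.add_sub_cancel, mul_assoc]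
  gcongr
  rw [sq]
  exact Nat.sub_le _ _

section Rational

variable {a k n m₁ m₂ a' k' n' m₁' m₂' : ℕ}

lemma mul_sub_mul_eq_of_shiftPoint_eq (ha : 0 < a) (ha' : 0 < a')
    (h : shiftPoint ℚ (a, k, n, m₁, m₂) = shiftPoint ℚ (a', k', n', m₁', m₂')) :
    (a' * (m₁ - m₂) * n : ℤ) = a * (m₁' - m₂') * n' := by
  simp only [shiftPoint, Prod.mk.injEq, div_eq_div_iff (Nat.cast_ne_zero.mpr ha.ne' : (a : ℚ) ≠ 0)
    (Nat.cast_ne_zero.mpr ha'.ne' : (a' : ℚ) ≠ 0)] at h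
  have : (a' * (m₁ - m₂) * n : ℚ) = a * (m₁' - m₂') * n' := by linear_combination h.1 - h.2
  exact_mod_cast this

lemma add_mul_eq_of_shiftPoint_eq (ha : 0 < a)
    (h : shiftPoint ℚ (a, k, n, m₁, m₂) = shiftPoint ℚ (a, k', n, m₁', m₂')) :
    k + m₁ * n = k' + m₁' * n := by
  have ha' : (a : ℚ) ≠ 0 := Nat.cast_ne_zero.mpr ha.ne'
  have := (div_left_inj' ha').mp (congrArg Prod.fst h)
  exact_mod_cast this

end Rational

lemma eq_and_eq_of_div_eq_of_add_mul_eq {n k k' m m' : ℕ} (hn : 0 < n) (hdiv : k / n = k' / n)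
    (h : k + m * n = k' + m' * n) : k = k' ∧ m = m' := by
  have hmod : k % n = k' % n := by
    simpa using congrArg (· % n) h
  have hk : k = k' := by rw [← Nat.div_add_mod k n, hdiv, hmod, Nat.div_add_mod]
  exact ⟨hk, Nat.eq_of_mul_eq_mul_right hn (by lia)⟩

/-- The collisions `(a, k, n, m₁, m₂)`, `(a', k', n', m₁', m₂')` with prescribed `a`,
`δ = m₁' - m₂'` and `n'`: both `a'` and `n` divide `a * δ * n'`, and the remaining freedom is the
choice of `k`, `m₁` and of `k'` to within a multiple of `n'`. -/
lemma card_collisions_fiber_le (A L N M : ℕ) {a n' : ℕ} {δ : ℤ} (h0 : a * δ * n' ≠ 0) :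
    #{x ∈ shiftIndex A L N M ×ˢ shiftIndex A L N M | shiftPoint ℚ x.1 = shiftPoint ℚ x.2 ∧
        (x.1.1, (x.2.2.2.2.1 - x.2.2.2.2.2 : ℤ), x.2.2.2.1) = (a, δ, n')} ≤
      #(a * δ * n').natAbs.divisors ^ 2 * (L * M * (L / n' + 1)) := by
  have hcard : #((a * δ * n').natAbs.divisors ×ˢ (a * δ * n').natAbs.divisors ×ˢ Icc 1 L ×ˢ
      Icc 1 M ×ˢ range (L / n' + 1)) =
        #(a * δ * n').natAbs.divisors ^ 2 * (L * M * (L / n' + 1)) := by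
    simp only [card_product, Nat.card_Icc, card_range, Nat.add_sub_cancel]
    ring
  rw [← hcard]
  refine card_le_card_of_injOn (fun ((_, k, n, m₁, _), (a', k', _)) ↦ (a', n, k, m₁, k' / n'))
    ?_ ?_
  · rintro ⟨⟨a₁, k, n, m₁, m₂⟩, ⟨a', k', n₁, m₁', m₂'⟩⟩ hx
    simp only [mem_coe, mem_filter, mem_product, mem_shiftIndex, Prod.mk.injEq] at hx
    obtain ⟨⟨⟨ha, hk, -, hm₁, -⟩, ha', hk', -⟩, heq, rfl, rfl, rfl⟩ := hx
    have hdvd := mul_sub_mul_eq_of_shiftPoint_eq ha.1 ha'.1 heq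
    simp only [mem_coe, mem_product, Nat.mem_divisors, Int.natAbs_ne_zero, ← Int.natCast_dvd,
      mem_Icc, mem_range, Nat.lt_succ_iff]
    exact ⟨⟨⟨_, by rw [← hdvd, mul_assoc]⟩, h0⟩, ⟨⟨_, by rw [← hdvd, mul_comm]⟩, h0⟩, hk, hm₁,
      Nat.div_le_div_right hk'.2⟩
  · rintro ⟨⟨a₁, k, n, m₁, m₂⟩, ⟨a', k', n₁, m₁', m₂'⟩⟩ hx
      ⟨⟨_, _, _, _, i₂⟩, ⟨_, _, _, _, _⟩⟩ hy hxy
    simp only [mem_coe, mem_filter, mem_product, mem_shiftIndex, Prod.mk.injEq] at hx hy hxy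
    obtain ⟨⟨⟨ha, -, hn, -⟩, ha', -, hn', -, -, -⟩, heq, rfl, rfl, rfl⟩ := hx
    obtain ⟨rfl, rfl, rfl, rfl, hq⟩ := hxy
    obtain ⟨-, heq', rfl, hδ, rfl⟩ := hy
    have hm₂ : m₂ = i₂ := by
      have h₁ := mul_sub_mul_eq_of_shiftPoint_eq ha.1 ha'.1 heq
      have h₂ := mul_sub_mul_eq_of_shiftPoint_eq ha.1 ha'.1 heq'
      rw [hδ, ← h₁, mul_right_cancel_iff_of_pos (by lia), mul_right_inj' (by lia)] at h₂
      lia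
    subst hm₂
    obtain ⟨rfl, rfl⟩ := eq_and_eq_of_div_eq_of_add_mul_eq hn'.1 hq
      (add_mul_eq_of_shiftPoint_eq ha'.1 (heq.symm.trans heq'))
    simp only [Prod.mk.injEq, true_and]
    lia

lemma card_collisions_le {A L N M : ℕ} {D : ℝ}
    (hD : ∀ x, 1 ≤ x → x ≤ A * M * N → (#x.divisors : ℝ) ≤ D) :
    (#{x ∈ shiftIndex A L N M ×ˢ shiftIndex A L N M | shiftPoint ℚ x.1 = shiftPoint ℚ x.2} : ℝ) ≤
      D ^ 2 * (2 * A * L * M ^ 2) * (N + L * (1 + Real.log N)) := by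
  have hδ : #((Icc (-M : ℤ) M).erase 0) = 2 * M := by
    rw [card_erase_of_mem (by simp), Int.card_Icc]
    lia
  have hfiber : ∀ y ∈ Icc 1 A ×ˢ (Icc (-M : ℤ) M).erase 0 ×ˢ Icc 1 N,
      (#{x ∈ shiftIndex A L N M ×ˢ shiftIndex A L N M | shiftPoint ℚ x.1 = shiftPoint ℚ x.2 ∧
        (x.1.1, (x.2.2.2.2.1 - x.2.2.2.2.2 : ℤ), x.2.2.2.1) = y} : ℝ) ≤
          D ^ 2 * (L * M * (L * (y.2.2 : ℝ)⁻¹ + 1)) := by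
    rintro ⟨a, δ, n'⟩ hy
    simp only [mem_product, mem_Icc, mem_erase] at hy
    obtain ⟨⟨ha, haA⟩, ⟨hδ0, hδM⟩, hn, hnN⟩ := hy
    have h0 : a * δ * n' ≠ 0 := by positivity
    have hdiv := hD (a * δ * n').natAbs (Int.natAbs_pos.mpr h0) <| by
      simp only [Int.natAbs_mul, Int.natAbs_natCast]
      gcongr
      lia
    refine (Nat.cast_le.mpr (card_collisions_fiber_le A L N M h0)).trans ?_
    push_cast
    gcongr
    exact Nat.cast_div_le
  have hharmonic : ∑ n ∈ Icc 1 N, (n : ℝ)⁻¹ ≤ 1 + Real.log N := by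
    simpa [harmonic_eq_sum_Icc] using harmonic_le_one_add_log N
  rw [card_eq_sum_card_fiberwise (t := Icc 1 A ×ˢ (Icc (-M : ℤ) M).erase 0 ×ˢ Icc 1 N)
    (f := fun x ↦ (x.1.1, (x.2.2.2.2.1 - x.2.2.2.2.2 : ℤ), x.2.2.2.1))]
  · simp only [filter_filter, Nat.cast_sum]
    refine (sum_le_sum hfiber).trans ?_
    simp only [sum_product, sum_const, card_product, hδ, ← mul_sum, sum_add_distrib, Nat.card_Icc,
      nsmul_eq_mul, Nat.add_sub_cancel]
    calc _ = D ^ 2 * (2 * A * L * M ^ 2) * (N + L * ∑ n ∈ Icc 1 N, (n : ℝ)⁻¹) := by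
          push_cast
          ring
      _ ≤ _ := by gcongr
  · rintro ⟨⟨a, k, n, m₁, m₂⟩, ⟨a', k', n', m₁', m₂'⟩⟩ hx
    simp only [coe_filter, mem_product, mem_shiftIndex, Set.mem_ofPred_eq] at hx
    simp only [coe_product, Set.mem_prod, mem_coe, mem_Icc, mem_erase]
    lia

lemma shiftPoint_rat_eq_of_shiftPoint_zmod_eq {p : ℕ} [Fact p.Prime] {A L N M : ℕ}
    (hp : A * (L + M * N) < p) {x y : ℕ × ℕ × ℕ × ℕ × ℕ} (hx : x ∈ shiftIndex A L N M)
    (hy : y ∈ shiftIndex A L N M) (hxy : shiftPoint (ZMod p) x = shiftPoint (ZMod p) y) :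
    shiftPoint ℚ x = shiftPoint ℚ y := by
  obtain ⟨a, k, n, m₁, m₂⟩ := x
  obtain ⟨a', k', n', m₁', m₂'⟩ := y
  rw [mem_shiftIndex] at hx hy
  have hlt {b k m n : ℕ} (hb : b ≤ A) (hk : k ≤ L) (hm : m ≤ M) (hn : n ≤ N) :
      (k + m * n) * b < p := by
    rw [mul_comm]
    exact lt_of_le_of_lt (by gcongr) hp
  have hne {b : ℕ} (hb : 0 < b ∧ b ≤ A) : (b : ZMod p) ≠ 0 := by
    have : b < p := by
      refine lt_of_le_of_lt (hb.2.trans (Nat.le_mul_of_pos_right A ?_)) hp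
      lia
    rw [Ne, ZMod.natCast_eq_zero_iff]
    exact Nat.not_dvd_of_pos_of_lt hb.1 this
  have hlift {m m' : ℕ} (hm : m ≤ M) (hm' : m' ≤ M)
      (h : ((k + m * n) / a : ZMod p) = (k' + m' * n') / a') :
      ((k + m * n) / a : ℚ) = (k' + m' * n') / a' := by
    rw [div_eq_div_iff (hne hx.1) (hne hy.1)] at h
    rw [div_eq_div_iff (Nat.cast_ne_zero.mpr hx.1.1.ne') (Nat.cast_ne_zero.mpr hy.1.1.ne')]
    norm_cast at h ⊢
    rwa [ZMod.natCast_eq_natCast_iff', Nat.mod_eq_of_lt (hlt hy.1.2 hx.2.1.2 hm hx.2.2.1.2),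
      Nat.mod_eq_of_lt (hlt hx.1.2 hy.2.1.2 hm' hy.2.2.1.2)] at h
  simp only [shiftPoint, Prod.mk.injEq] at hxy ⊢
  exact ⟨hlift (by lia) (by lia) hxy.1, hlift (by lia) (by lia) hxy.2⟩

lemma card_zmod_collisions_le {p : ℕ} [Fact p.Prime] {A L N M : ℕ} (hp : A * (L + M * N) < p)
    {D : ℝ} (hD : ∀ x, 1 ≤ x → x ≤ A * M * N → (#x.divisors : ℝ) ≤ D) :
    (#{x ∈ shiftIndex A L N M ×ˢ shiftIndex A L N M |
        shiftPoint (ZMod p) x.1 = shiftPoint (ZMod p) x.2} : ℝ) ≤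
      D ^ 2 * (2 * A * L * M ^ 2) * (N + L * (1 + Real.log N)) := by
  refine le_trans ?_ (card_collisions_le hD)
  gcongr with x hx
  intro h
  rw [mem_product] at hx
  exact shiftPoint_rat_eq_of_shiftPoint_zmod_eq hp hx.1 hx.2 h

end CollisionCount

section ShiftStep

open scoped ComplexConjugate

lemma sum_norm_sum_mul_sq_le {ι κ : Type*} (s : Finset ι) (t : Finset κ) {α : ι → ℂ}
    (hα : ∀ m, ‖α m‖ ≤ 1) (f : ι → κ → ℂ) :
    ∑ b ∈ t, ‖∑ m ∈ s, α m * f m b‖ ^ 2 ≤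
      ∑ m₁ ∈ s, ∑ m₂ ∈ s, ‖∑ b ∈ t, f m₁ b * conj (f m₂ b)‖ := by
  have hexpand : ((∑ b ∈ t, ‖∑ m ∈ s, α m * f m b‖ ^ 2 : ℝ) : ℂ) =
      ∑ m₁ ∈ s, ∑ m₂ ∈ s, α m₁ * conj (α m₂) * ∑ b ∈ t, f m₁ b * conj (f m₂ b) := by
    push_cast
    simp only [← Complex.mul_conj', map_sum, map_mul, sum_mul_sum]
    rw [sum_comm]
    refine sum_congr rfl fun m₁ _ ↦ ?_
    rw [sum_comm]
    refine sum_congr rfl fun m₂ _ ↦ ?_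
    rw [mul_sum]
    exact sum_congr rfl fun b _ ↦ by ring
  rw [← Complex.norm_of_nonneg (by positivity : 0 ≤ ∑ b ∈ t, ‖∑ m ∈ s, α m * f m b‖ ^ 2), hexpand]
  refine (norm_sum_le _ _).trans (sum_le_sum fun m₁ _ ↦ (norm_sum_le _ _).trans
    (sum_le_sum fun m₂ _ ↦ ?_))
  rw [norm_mul, norm_mul, RCLike.norm_conj]
  exact mul_le_of_le_one_left (norm_nonneg _) (mul_le_one₀ (hα _) (norm_nonneg _) (hα _))

lemma sum_Icc_le_sum_Icc_two_mul_sub {R : Type*} [AddGroupWithOne R] {F : R → ℝ} (hF : ∀ x, 0 ≤ F x)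
    {K c : ℕ} (hc : c ≤ K) :
    ∑ k ∈ Icc 1 K, F k ≤ ∑ k ∈ Icc 1 (2 * K), F (k - c) := by
  calc ∑ k ∈ Icc 1 K, F k = ∑ k ∈ (Icc 1 K).map (addRightEmbedding c), F (k - c) := by
        simp only [sum_map, addRightEmbedding_apply, Nat.cast_add, add_sub_cancel_right]
    _ ≤ ∑ k ∈ Icc 1 (2 * K), F (k - c) := by
        refine sum_le_sum_of_subset_of_nonneg ?_ fun k _ _ ↦ hF _
        rw [map_add_right_Icc]
        exact Icc_subset_Icc (by lia) (by lia)

variable {p : ℕ} (χ : MulChar (ZMod p) ℂ)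

/-- The correlation `|∑_{b ≤ B} χ(u - b) χ̄(v - b)|` of two length-`B` translates of `χ`, as a
function of the pair `(u, v)`. -/
noncomputable def shiftCorrelation (B : ℕ) (y : ZMod p × ZMod p) : ℝ :=
  ‖∑ b ∈ Icc 1 B, χ (y.1 - b) * conj (χ (y.2 - b))‖

lemma shiftCorrelation_nonneg (B : ℕ) (y : ZMod p × ZMod p) : 0 ≤ shiftCorrelation χ B y :=
  norm_nonneg _

lemma shiftCorrelation_le (B : ℕ) (y : ZMod p × ZMod p) : shiftCorrelation χ B y ≤ B := by
  have hterm (b : ℕ) : ‖χ (y.1 - b) * conj (χ (y.2 - b))‖ ≤ 1 := by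
    rw [norm_mul, RCLike.norm_conj]
    exact mul_le_one₀ (DirichletCharacter.norm_le_one χ _) (norm_nonneg _)
      (DirichletCharacter.norm_le_one χ _)
  simpa [shiftCorrelation] using norm_sum_le_of_le (Icc 1 B) fun b _ ↦ hterm b

/-- The factor depending only on `r` in the bound for the `2r`-th moment of `shiftCorrelation`. -/
def momentConstant (r : ℕ) : ℝ := r ^ (2 * r) * 2 ^ r + (2 * r) ^ 2

lemma momentConstant_nonneg (r : ℕ) : 0 ≤ momentConstant r := by
  unfold momentConstant
  positivity

variable [Fact p.Prime]

variable {χ} in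
lemma sum_shiftCorrelation_pow_le (hχ : χ ≠ 1) {B r : ℕ} (hr : r ≠ 0) (hB : B < p)
    (hp : (p : ℝ) ≤ (2 * B) ^ r) :
    ∑ y, shiftCorrelation χ B y ^ (2 * r) ≤
      momentConstant r * (B : ℝ) ^ (2 * r) * p := by
  have hinj : Set.InjOn (Nat.cast : ℕ → ZMod p) (Icc 1 B) := by
    intro b hb b' hb' h
    simp only [coe_Icc, Set.mem_Icc] at hb hb'
    rwa [ZMod.natCast_eq_natCast_iff', Nat.mod_eq_of_lt (by lia), Nat.mod_eq_of_lt (by lia)] at h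
  have hmoment := sum_sum_norm_sum_mulChar_mul_conj_pow_le hχ ((Icc 1 B).image Nat.cast) hr
  simp only [sum_image hinj, card_image_of_injOn hinj, Nat.card_Icc, Nat.add_sub_cancel] at hmoment
  rw [Fintype.sum_prod_type]
  calc _ ≤ (r : ℝ) ^ (2 * r) * B ^ r * (p * p) + (2 * r) ^ 2 * B ^ (2 * r) * p := by
        simpa only [shiftCorrelation, sq (p : ℝ)] using hmoment
    _ ≤ (r : ℝ) ^ (2 * r) * B ^ r * ((2 * B) ^ r * p) + (2 * r) ^ 2 * B ^ (2 * r) * p := by gcongr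
    _ = _ := by
        rw [momentConstant]
        ring

lemma norm_mulChar_eq_one {a : ZMod p} (ha : a ≠ 0) : ‖χ a‖ = 1 :=
  DirichletCharacter.unit_norm_eq_one χ (Units.mk0 a ha)

lemma sum_norm_sum_mulChar_shift_sq_le {α : ℕ → ℂ} (hα : ∀ m, ‖α m‖ ≤ 1) (M B : ℕ) (k n : ℕ)
    {a : ℕ} (ha : (a : ZMod p) ≠ 0) :
    ∑ b ∈ Icc 1 B, ‖∑ m ∈ Icc 1 M, α m * χ (k - a * b + m * n)‖ ^ 2 ≤
      ∑ m₁ ∈ Icc 1 M, ∑ m₂ ∈ Icc 1 M,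
        shiftCorrelation χ B (shiftPoint (ZMod p) (a, k, n, m₁, m₂)) := by
  have hfactor (m b : ℕ) : χ (k - a * b + m * n) = χ a * χ ((k + m * n) / a - b) := by
    rw [← map_mul]
    congr 1
    field_simp
    ring
  have hnorm (b : ℕ) : ‖∑ m ∈ Icc 1 M, α m * χ (k - a * b + m * n)‖ =
      ‖∑ m ∈ Icc 1 M, α m * χ ((k + m * n) / a - b)‖ := by
    simp only [hfactor, mul_left_comm _ (χ a), ← mul_sum, norm_mul, norm_mulChar_eq_one χ ha,
      one_mul]
  simp only [hnorm]
  exact sum_norm_sum_mul_sq_le (Icc 1 M) (Icc 1 B) hα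
    fun m b : ℕ ↦ χ (((k : ZMod p) + m * n) / a - b)

lemma sum_sum_sum_shiftCorrelation_le (A B L N M : ℕ) :
    ∑ a ∈ Icc 1 A, ∑ k ∈ Icc 1 L, ∑ n ∈ Icc 1 N, ∑ m₁ ∈ Icc 1 M, ∑ m₂ ∈ Icc 1 M,
        shiftCorrelation χ B (shiftPoint (ZMod p) (a, k, n, m₁, m₂)) ≤
      A * L * N * M * B +
        ∑ i ∈ shiftIndex A L N M, shiftCorrelation χ B (shiftPoint (ZMod p) i) := by
  have hsplit (a k n : ℕ) : ∑ m₁ ∈ Icc 1 M, ∑ m₂ ∈ Icc 1 M,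
        shiftCorrelation χ B (shiftPoint (ZMod p) (a, k, n, m₁, m₂)) ≤ M * B +
      ∑ m ∈ (Icc 1 M).offDiag, shiftCorrelation χ B (shiftPoint (ZMod p) (a, k, n, m)) := by
    rw [← sum_product', ← diag_union_offDiag, sum_union (disjoint_diag_offDiag _), sum_diag]
    gcongr
    simpa using sum_le_card_nsmul (Icc 1 M) _ (B : ℝ) fun m _ ↦ shiftCorrelation_le χ B _
  refine (sum_le_sum fun a _ ↦ sum_le_sum fun k _ ↦ sum_le_sum fun n _ ↦ hsplit a k n).trans ?_
  simp [shiftIndex, sum_product, sum_add_distrib, mul_assoc]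

lemma mul_sum_sum_norm_sum_sq_le {α : ℕ → ℂ} (hα : ∀ m, ‖α m‖ ≤ 1) {A B K : ℕ} (M N : ℕ)
    (hAB : A * B ≤ K) (hA : A < p) :
    (A * B : ℝ) * ∑ k ∈ Icc 1 K, ∑ n ∈ Icc 1 N, ‖∑ m ∈ Icc 1 M, α m * χ (k + m * n)‖ ^ 2 ≤
      A * (2 * K) * N * M * B +
        ∑ i ∈ shiftIndex A (2 * K) N M, shiftCorrelation χ B (shiftPoint (ZMod p) i) := by
  have hshift : ∀ a ∈ Icc 1 A, ∀ b ∈ Icc 1 B,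
      ∑ k ∈ Icc 1 K, ∑ n ∈ Icc 1 N, ‖∑ m ∈ Icc 1 M, α m * χ (k + m * n)‖ ^ 2 ≤
        ∑ k ∈ Icc 1 (2 * K), ∑ n ∈ Icc 1 N, ‖∑ m ∈ Icc 1 M, α m * χ (k - a * b + m * n)‖ ^ 2 := by
    intro a ha b hb
    rw [mem_Icc] at ha hb
    have := sum_Icc_le_sum_Icc_two_mul_sub (c := a * b) (K := K)
      (F := fun x : ZMod p ↦ ∑ n ∈ Icc 1 N, ‖∑ m ∈ Icc 1 M, α m * χ (x + m * n)‖ ^ 2)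
      (fun x ↦ by positivity) ((Nat.mul_le_mul ha.2 hb.2).trans hAB)
    simpa only [Nat.cast_mul] using this
  calc _ = ∑ a ∈ Icc 1 A, ∑ b ∈ Icc 1 B, ∑ k ∈ Icc 1 K, ∑ n ∈ Icc 1 N,
        ‖∑ m ∈ Icc 1 M, α m * χ (k + m * n)‖ ^ 2 := by simp [mul_assoc]
    _ ≤ ∑ a ∈ Icc 1 A, ∑ b ∈ Icc 1 B, ∑ k ∈ Icc 1 (2 * K), ∑ n ∈ Icc 1 N,
        ‖∑ m ∈ Icc 1 M, α m * χ (k - a * b + m * n)‖ ^ 2 :=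
      sum_le_sum fun a ha ↦ sum_le_sum fun b hb ↦ hshift a ha b hb
    _ = ∑ a ∈ Icc 1 A, ∑ k ∈ Icc 1 (2 * K), ∑ n ∈ Icc 1 N, ∑ b ∈ Icc 1 B,
        ‖∑ m ∈ Icc 1 M, α m * χ (k - a * b + m * n)‖ ^ 2 :=
      sum_congr rfl fun a _ ↦ sum_comm.trans (sum_congr rfl fun k _ ↦ sum_comm)
    _ ≤ ∑ a ∈ Icc 1 A, ∑ k ∈ Icc 1 (2 * K), ∑ n ∈ Icc 1 N, ∑ m₁ ∈ Icc 1 M, ∑ m₂ ∈ Icc 1 M,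
        shiftCorrelation χ B (shiftPoint (ZMod p) (a, k, n, m₁, m₂)) := by
      gcongr with a ha k _ n _
      rw [mem_Icc] at ha
      refine sum_norm_sum_mulChar_shift_sq_le χ hα M B k n ?_
      rw [Ne, ZMod.natCast_eq_zero_iff]
      exact Nat.not_dvd_of_pos_of_lt ha.1 (ha.2.trans_lt hA)
    _ ≤ _ := by exact_mod_cast sum_sum_sum_shiftCorrelation_le χ A B (2 * K) N M

end ShiftStep

section BilinearBound

variable {p : ℕ} [Fact p.Prime] {χ : MulChar (ZMod p) ℂ}

lemma sum_shiftCorrelation_shiftPoint_le (hχ : χ ≠ 1) {A B L N M r : ℕ} (hr : r ≠ 0) (hB : B < p)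
    (hp : (p : ℝ) ≤ (2 * B) ^ r) {J θ : ℝ} (hθ : 0 ≤ θ)
    (hJ : (#{x ∈ shiftIndex A L N M ×ˢ shiftIndex A L N M |
      shiftPoint (ZMod p) x.1 = shiftPoint (ZMod p) x.2} : ℝ) ≤ J)
    (hJθ : J * (momentConstant r * p) ≤ (A * L * N * M ^ 2) ^ 2 * θ ^ (2 * r)) :
    ∑ i ∈ shiftIndex A L N M, shiftCorrelation χ B (shiftPoint (ZMod p) i) ≤
      A * L * N * M ^ 2 * B * θ := by
  have hcard : (#(shiftIndex A L N M) : ℝ) ≤ A * L * N * M ^ 2 := by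
    exact_mod_cast card_shiftIndex_le A L N M
  have hmoment := sum_shiftCorrelation_pow_le hχ hr hB hp
  have hJ0 : 0 ≤ J := (Nat.cast_nonneg _).trans hJ
  have hnonneg := shiftCorrelation_nonneg χ B
  obtain ⟨s, rfl⟩ := Nat.exists_eq_succ_of_ne_zero hr
  refine le_of_pow_le_pow_left₀ (n := 2 * (s + 1)) (by lia) (by positivity) ?_
  calc _ ≤ _ := sum_comp_pow_le (shiftIndex A L N M) (shiftPoint (ZMod p)) hnonneg s
    _ ≤ (A * L * N * M ^ 2 : ℝ) ^ (2 * s) * J *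
          (momentConstant (s + 1) * (B : ℝ) ^ (2 * (s + 1)) * p) := by
        have := sum_nonneg fun y (_ : y ∈ univ) ↦ pow_nonneg (hnonneg y) (2 * (s + 1))
        gcongr
    _ = (A * L * N * M ^ 2 : ℝ) ^ (2 * s) * (J * (momentConstant (s + 1) * p)) *
          (B : ℝ) ^ (2 * (s + 1)) := by ring
    _ ≤ (A * L * N * M ^ 2 : ℝ) ^ (2 * s) * ((A * L * N * M ^ 2) ^ 2 * θ ^ (2 * (s + 1))) *
          (B : ℝ) ^ (2 * (s + 1)) := by gcongr
    _ = (A * L * N * M ^ 2 * B * θ) ^ (2 * (s + 1)) := by ring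

lemma sum_sum_norm_sum_mulChar_sq_le (hχ : χ ≠ 1) {α : ℕ → ℂ} (hα : ∀ m, ‖α m‖ ≤ 1)
    {A B K M N r : ℕ} (hr : r ≠ 0) (hA : 0 < A) (hB : 0 < B) (hAB : A * B ≤ K)
    (hsize : A * (2 * K + M * N) < p) (hp : (p : ℝ) ≤ (2 * B) ^ r) {D θ : ℝ} (hθ : 0 ≤ θ)
    (hD : ∀ x, 1 ≤ x → x ≤ p → (#x.divisors : ℝ) ≤ D)
    (hDθ : D ^ 2 * (2 * A * (2 * K) * M ^ 2) * (N + 2 * K * (1 + Real.log N)) *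
      (momentConstant r * p) ≤ (A * (2 * K) * N * M ^ 2) ^ 2 * θ ^ (2 * r)) :
    ∑ k ∈ Icc 1 K, ∑ n ∈ Icc 1 N, ‖∑ m ∈ Icc 1 M, α m * χ (k + m * n)‖ ^ 2 ≤
      K * N * (2 * M + 2 * M ^ 2 * θ) := by
  have hBK : B ≤ K := (Nat.le_mul_of_pos_left B hA).trans hAB
  have hAp : A < p := (Nat.le_mul_of_pos_right A (by lia)).trans_lt hsize
  have hBp : B < p := by
    have := Nat.le_mul_of_pos_left (2 * K + M * N) hA
    lia
  have hcollisions := card_zmod_collisions_le (N := N) (M := M) hsize fun x hx hxA ↦ hD x hx <| by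
    rw [mul_assoc] at hxA
    exact (hxA.trans (Nat.mul_le_mul_left A (Nat.le_add_left _ _))).trans hsize.le
  push_cast at hcollisions
  have hoff := sum_shiftCorrelation_shiftPoint_le hχ hr hBp hp hθ hcollisions
    (by push_cast; exact hDθ)
  have hshift := mul_sum_sum_norm_sum_sq_le χ hα M N hAB hAp
  refine le_of_mul_le_mul_left (hshift.trans ((add_le_add_right hoff _).trans_eq ?_))
    (by positivity : (0 : ℝ) < A * B)
  push_cast
  ring

end BilinearBound

section TrilinearSum

variable {p : ℕ} {χ : MulChar (ZMod p) ℂ}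

/-- The trilinear sum `∑ α_m β_{k,n} χ(k + mn)` over the box `k ≤ K`, `m ≤ M`, `n ≤ N`. -/
noncomputable def trilinearSum (χ : MulChar (ZMod p) ℂ) (α : ℕ → ℂ) (β : ℕ → ℕ → ℂ)
    (K M N : ℕ) : ℂ :=
  ∑ k ∈ Icc 1 K, ∑ m ∈ Icc 1 M, ∑ n ∈ Icc 1 N, α m * β k n * χ (k + m * n)

variable {α : ℕ → ℂ} {β : ℕ → ℕ → ℂ}

lemma norm_trilinearSum_le (hα : ∀ m, ‖α m‖ ≤ 1) (hβ : ∀ k n, ‖β k n‖ ≤ 1) (K M N : ℕ) :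
    ‖trilinearSum χ α β K M N‖ ≤ K * M * N := by
  have hterm (k m n : ℕ) : ‖α m * β k n * χ (k + m * n)‖ ≤ 1 := by
    rw [norm_mul, norm_mul]
    exact mul_le_one₀ (mul_le_one₀ (hα m) (norm_nonneg _) (hβ k n)) (norm_nonneg _)
      (DirichletCharacter.norm_le_one χ _)
  have := norm_sum_le_of_le (Icc 1 K) fun k _ ↦ norm_sum_le_of_le (Icc 1 M) fun m _ ↦
    norm_sum_le_of_le (Icc 1 N) fun n _ ↦ hterm k m n
  simpa [trilinearSum, mul_assoc] using this

lemma norm_trilinearSum_sq_le (hβ : ∀ k n, ‖β k n‖ ≤ 1) (K M N : ℕ) :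
    ‖trilinearSum χ α β K M N‖ ^ 2 ≤
      K * N * ∑ k ∈ Icc 1 K, ∑ n ∈ Icc 1 N, ‖∑ m ∈ Icc 1 M, α m * χ (k + m * n)‖ ^ 2 := by
  have hnorm : ‖trilinearSum χ α β K M N‖ ≤
      ∑ x ∈ Icc 1 K ×ˢ Icc 1 N, ‖∑ m ∈ Icc 1 M, α m * χ (x.1 + m * x.2)‖ := by
    rw [sum_product]
    refine norm_sum_le_of_le _ fun k _ ↦ ?_
    rw [sum_comm]
    refine norm_sum_le_of_le _ fun n _ ↦ ?_
    simp only [mul_right_comm _ (β k n), ← sum_mul]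
    rw [norm_mul]
    exact mul_le_of_le_one_right (norm_nonneg _) (hβ k n)
  calc _ ≤ (∑ x ∈ Icc 1 K ×ˢ Icc 1 N, ‖∑ m ∈ Icc 1 M, α m * χ (x.1 + m * x.2)‖) ^ 2 := by gcongr
    _ ≤ _ := by
        simpa [sum_product] using sq_sum_le_card_mul_sum_sq (s := Icc 1 K ×ˢ Icc 1 N)
          (f := fun x ↦ ‖∑ m ∈ Icc 1 M, α m * χ (x.1 + m * x.2)‖)

end TrilinearSum

section Parameters

lemma exists_shift_parameters {E : ℝ} {K : ℕ} (hE : 1 ≤ E) (hEK : E ≤ K) :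
    ∃ A B : ℕ, 0 < A ∧ 0 < B ∧ A * B ≤ K ∧ E ≤ 2 * B ∧ (K : ℝ) ≤ 2 * E * A := by
  have hB : 0 < ⌊E⌋₊ := Nat.floor_pos.mpr hE
  have hA : 0 < K / ⌊E⌋₊ := Nat.div_pos (Nat.floor_le_of_le hEK) hB
  refine ⟨K / ⌊E⌋₊, ⌊E⌋₊, hA, hB, Nat.div_mul_le_self K _, ?_, ?_⟩
  · linarith [Nat.div_two_lt_floor hE]
  · have hK : K ≤ 2 * (⌊E⌋₊ * (K / ⌊E⌋₊)) := by
      have := Nat.lt_mul_div_succ K hB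
      have := Nat.le_mul_of_pos_right ⌊E⌋₊ hA
      lia
    calc (K : ℝ) ≤ 2 * (⌊E⌋₊ * (K / ⌊E⌋₊ : ℕ)) := by exact_mod_cast hK
      _ ≤ 2 * (E * (K / ⌊E⌋₊ : ℕ)) := by
          gcongr
          exact Nat.floor_le (by linarith)
      _ = 2 * E * (K / ⌊E⌋₊ : ℕ) := by ring

lemma mul_two_mul_add_mul_lt {p K M N : ℕ} (hp : 16 < p) (hK : K ^ 4 ≤ p) (hM : M ^ 4 ≤ p)
    (hN : N ^ 4 ≤ p) : K * (2 * K + M * N) < p := by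
  obtain ⟨Z, hKZ, hMZ, hNZ, hZ⟩ : ∃ Z, K ≤ Z ∧ M ≤ Z ∧ N ≤ Z ∧ Z ^ 4 ≤ p := by
    refine ⟨max K (max M N), by simp, by simp, by simp, ?_⟩
    rcases max_choice K (max M N) with h | h <;> rcases max_choice M N with h' | h' <;>
      simp_all
  calc K * (2 * K + M * N) ≤ Z * (2 * Z + Z * Z) := by gcongr
    _ < p := by
        rcases Nat.lt_or_ge Z 3 with h | h
        · interval_cases Z <;> lia
        · nlinarith [Nat.mul_le_mul h h, pow_pos (by lia : 0 < Z) 2, pow_pos (by lia : 0 < Z) 3]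

/-- The collision bound fits the moment budget: `q` is the lower bound for `K`, `M`, `N`, and
`32 q⁵ = P E⁵` is exactly where the exponent `1 / 5` is needed. -/
lemma collision_mul_le {A K M N P E q D c h Λ T : ℝ} (hE : 1 ≤ E) (hP : 0 ≤ P) (hΛ : 0 ≤ Λ)
    (hq : 0 < q) (hqK : q ≤ K) (hqM : q ≤ M) (hqN : q ≤ N) (hA : 0 ≤ A) (hKA : K ≤ 2 * E * A)
    (hqE : 32 * q ^ 5 = P * E ^ 5) (hc : 0 ≤ c) (hh : h ≤ c * E)
    (hDT : 64 * D ^ 2 * (1 + 2 * c) * Λ ≤ T * E) :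
    (D * E) ^ 2 * (2 * A * (2 * K) * M ^ 2) * (N + 2 * K * h) * (Λ * P) ≤
      (A * (2 * K) * N * M ^ 2) ^ 2 * T := by
  have hK := hq.trans_le hqK
  have hM := hq.trans_le hqM
  have hN := hq.trans_le hqN
  have hlinear : q * (N + 2 * K * h) ≤ (1 + 2 * c) * E * (K * N) := by
    calc q * (N + 2 * K * h) ≤ q * (N + 2 * K * (c * E)) := by gcongr
      _ = q * N + q * (2 * K * (c * E)) := by ring
      _ ≤ K * (N * E) + N * (2 * K * (c * E)) := by
          gcongr
          exact le_mul_of_one_le_right hN.le hE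
      _ = (1 + 2 * c) * E * (K * N) := by ring
  have hquartic : q ^ 4 * K ≤ K * N * M ^ 2 * (2 * E * A) := by
    calc q ^ 4 * K = q * q * q ^ 2 * K := by ring
      _ ≤ K * N * M ^ 2 * (2 * E * A) := by gcongr
  have hP5 : D ^ 2 * E ^ 4 * (1 + 2 * c) * Λ * P * 2 ≤ q ^ 5 * T := by
    refine le_of_mul_le_mul_left ?_ (by norm_num : (0 : ℝ) < 32)
    calc 32 * (D ^ 2 * E ^ 4 * (1 + 2 * c) * Λ * P * 2)
        = 64 * D ^ 2 * (1 + 2 * c) * Λ * (P * E ^ 4) := by ring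
      _ ≤ T * E * (P * E ^ 4) := by gcongr
      _ = 32 * q ^ 5 * T := by rw [hqE]; ring
      _ = _ := by ring
  refine le_of_mul_le_mul_right ?_ (by positivity : 0 < q ^ 5)
  calc (D * E) ^ 2 * (2 * A * (2 * K) * M ^ 2) * (N + 2 * K * h) * (Λ * P) * q ^ 5
      = D ^ 2 * E ^ 2 * (4 * A * M ^ 2) * (Λ * P) * (q * (N + 2 * K * h)) * (q ^ 4 * K) := by ring
    _ ≤ D ^ 2 * E ^ 2 * (4 * A * M ^ 2) * (Λ * P) * ((1 + 2 * c) * E * (K * N)) *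
          (K * N * M ^ 2 * (2 * E * A)) := by gcongr
    _ = (A * (2 * K) * N * M ^ 2) ^ 2 * (D ^ 2 * E ^ 4 * (1 + 2 * c) * Λ * P * 2) := by ring
    _ ≤ (A * (2 * K) * N * M ^ 2) ^ 2 * (q ^ 5 * T) := by gcongr
    _ = _ := by ring

variable {p : ℕ} [Fact p.Prime] {χ : MulChar (ZMod p) ℂ} {α : ℕ → ℂ} {β : ℕ → ℕ → ℂ}

lemma norm_trilinearSum_sq_le_of_scale (hχ : χ ≠ 1) (hα : ∀ m, ‖α m‖ ≤ 1)
    (hβ : ∀ k n, ‖β k n‖ ≤ 1) {K M N r : ℕ} {E q D c θ : ℝ} (hp : 16 < p) (hr : r ≠ 0)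
    (hE : 1 ≤ E) (hEr : (p : ℝ) ≤ E ^ r) (hEq : E ≤ q) (hqE : 32 * q ^ 5 = p * E ^ 5)
    (hqK : q ≤ K) (hqM : q ≤ M) (hqN : q ≤ N)
    (hK : K ^ 4 ≤ p) (hM : M ^ 4 ≤ p) (hN : N ^ 4 ≤ p)
    (hD : ∀ x, 1 ≤ x → x ≤ p → (#x.divisors : ℝ) ≤ D * E) (hlog : 1 + Real.log p ≤ c * E)
    (hθ : 0 ≤ θ) (hDθ : 64 * D ^ 2 * (1 + 2 * c) * momentConstant r ≤ θ ^ (2 * r) * E) :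
    ‖trilinearSum χ α β K M N‖ ^ 2 ≤ (K * N) ^ 2 * (2 * M + 2 * M ^ 2 * θ) := by
  obtain ⟨A, B, hA, hB, hAB, hEB, hKA⟩ := exists_shift_parameters hE (hEq.trans hqK)
  have hp0 : (0 : ℝ) < p := by exact_mod_cast (by lia : 0 < p)
  have hAK : A ≤ K := (Nat.le_mul_of_pos_right A hB).trans hAB
  have hsize : A * (2 * K + M * N) < p :=
    (Nat.mul_le_mul_right _ hAK).trans_lt (mul_two_mul_add_mul_lt hp hK hM hN)
  have hc : 0 ≤ c := by
    have : 0 ≤ c * E := (add_nonneg zero_le_one (Real.log_natCast_nonneg p)).trans hlog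
    exact nonneg_of_mul_nonneg_left this (by linarith)
  have hlogN : 1 + Real.log N ≤ c * E := by
    have hN0 : 0 < N := by exact_mod_cast (by linarith : (0 : ℝ) < N)
    have hNp : N ≤ p := (Nat.le_self_pow (by norm_num) N).trans hN
    exact hlog.trans' (by gcongr)
  have hEBr : (p : ℝ) ≤ (2 * B) ^ r := hEr.trans (by gcongr)
  have hsum := sum_sum_norm_sum_mulChar_sq_le hχ hα hr hA hB hAB hsize hEBr hθ hD <|
    collision_mul_le hE hp0.le (momentConstant_nonneg r) (by linarith) hqK hqM hqN A.cast_nonneg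
      hKA hqE hc hlogN hDθ
  calc _ ≤ _ := norm_trilinearSum_sq_le hβ K M N
    _ ≤ K * N * (K * N * (2 * M + 2 * M ^ 2 * θ)) := by gcongr
    _ = _ := by ring

end Parameters

section PowerSaving

lemma two_mul_rpow_le_rpow_add {x : ℝ} (hx : 32 ≤ x) (η : ℝ) :
    2 * x ^ η ≤ x ^ ((1 : ℝ) / 5 + η) := by
  have h2 : (2 : ℝ) ≤ x ^ ((1 : ℝ) / 5) := by
    rw [one_div, Real.le_rpow_inv_iff_of_pos (by norm_num) (by linarith) (by norm_num)]
    norm_num [hx]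
  rw [Real.rpow_add (by linarith)]
  gcongr

lemma mul_half_rpow_add_pow_five {x : ℝ} (hx : 0 < x) (η : ℝ) :
    32 * (x ^ ((1 : ℝ) / 5 + η) / 2) ^ 5 = x * (x ^ η) ^ 5 := by
  have hroot : (x ^ ((1 : ℝ) / 5)) ^ 5 = x := by
    rw [← Real.rpow_natCast, ← Real.rpow_mul hx.le]
    norm_num
  rw [Real.rpow_add hx, div_pow, mul_pow, hroot]
  ring

lemma le_rpow_pow_of_one_div_le {x η : ℝ} {n : ℕ} (hx : 1 ≤ x) (hη : 0 < η) (hn : 1 / η ≤ n) :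
    x ≤ (x ^ η) ^ n := by
  rw [← Real.rpow_natCast, ← Real.rpow_mul (by linarith)]
  exact Real.self_le_rpow_of_one_le hx ((div_le_iff₀' hη).mp hn)

lemma one_add_log_le_mul_rpow {x η : ℝ} (hx : 1 ≤ x) (hη : 0 < η) :
    1 + Real.log x ≤ (1 + 1 / η) * x ^ η := by
  calc 1 + Real.log x ≤ x ^ η + x ^ η / η :=
        add_le_add (Real.one_le_rpow hx hη.le) (Real.log_le_rpow_div (by linarith) hη)
    _ = (1 + 1 / η) * x ^ η := by ring

lemma rpow_neg_div_pow_mul_rpow {x : ℝ} (hx : 0 < x) (η : ℝ) {n : ℕ} (hn : n ≠ 0) :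
    (x ^ (-(η / n))) ^ n * x ^ η = 1 := by
  rw [← Real.rpow_natCast, ← Real.rpow_mul hx.le, ← Real.rpow_add hx, neg_mul,
    div_mul_cancel₀ _ (Nat.cast_ne_zero.mpr hn), neg_add_cancel, Real.rpow_zero]

lemma le_mul_of_sq_le_diagonal_add {S K M N c t : ℝ} (hK : 0 ≤ K) (hM : 0 ≤ M) (hN : 0 ≤ N)
    (ht : 0 ≤ t) (hc : 0 ≤ c) (hMt : 1 ≤ M * t ^ 2)
    (hS : S ^ 2 ≤ (K * N) ^ 2 * (2 * M + 2 * M ^ 2 * (c * t ^ 2))) :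
    S ≤ 2 * (1 + c) * (K * M * N) * t := by
  refine le_of_sq_le_sq ?_ (by positivity)
  calc S ^ 2 ≤ _ := hS
    _ ≤ (K * N) ^ 2 * (2 * M * (M * t ^ 2) + 2 * M ^ 2 * (c * t ^ 2)) := by
      have : 2 * M ≤ 2 * M * (M * t ^ 2) := le_mul_of_one_le_right (by positivity) hMt
      gcongr
    _ = 2 * (1 + c) * (K * M * N * t) ^ 2 := by ring
    _ ≤ (2 * (1 + c)) ^ 2 * (K * M * N * t) ^ 2 := by
      gcongr
      exact le_self_pow₀ (by linarith) two_ne_zero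
    _ = _ := by ring

lemma norm_trilinearSum_le_of_large {p r K M N : ℕ} [Fact p.Prime] {χ : MulChar (ZMod p) ℂ}
    {α : ℕ → ℂ} {β : ℕ → ℕ → ℂ} {η D c : ℝ} (hη : 0 < η) (hD0 : 0 ≤ D)
    (hD : ∀ n : ℕ, n ≠ 0 → (#n.divisors : ℝ) ≤ D * (n : ℝ) ^ η) (hr : 1 / η ≤ r) (hc : 1 ≤ c)
    (hDc : 64 * D ^ 2 * (1 + 2 * (1 + 1 / η)) * momentConstant r ≤ c) (hp : 32 ≤ p)
    (hχ : χ ≠ 1) (hα : ∀ m, ‖α m‖ ≤ 1) (hβ : ∀ k n, ‖β k n‖ ≤ 1)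
    (hqK : (p : ℝ) ^ ((1 : ℝ) / 5 + η) / 2 ≤ K) (hK : K ^ 4 ≤ p)
    (hqM : (p : ℝ) ^ ((1 : ℝ) / 5 + η) / 2 ≤ M) (hM : M ^ 4 ≤ p)
    (hqN : (p : ℝ) ^ ((1 : ℝ) / 5 + η) / 2 ≤ N) (hN : N ^ 4 ≤ p) :
    ‖trilinearSum χ α β K M N‖ ≤ 2 * (1 + c) * (K * M * N) * (p : ℝ) ^ (-(η / (4 * r : ℕ))) := by
  have hr0 : 0 < r := by exact_mod_cast (by positivity : 0 < 1 / η).trans_le hr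
  have hp32 : (32 : ℝ) ≤ p := by exact_mod_cast hp
  have hp1 : (1 : ℝ) ≤ p := by linarith
  have hp0 : (0 : ℝ) < p := by linarith
  set t := (p : ℝ) ^ (-(η / (4 * r : ℕ)))
  have ht : 0 < t := by positivity
  have ht1 : t ≤ 1 := Real.rpow_le_one_of_one_le_of_nonpos hp1 (neg_nonpos.mpr (by positivity))
  have hsave : t ^ (4 * r) * (p : ℝ) ^ η = 1 := rpow_neg_div_pow_mul_rpow hp0 η (by lia)
  have hEq := (le_div_iff₀' two_pos).mpr (two_mul_rpow_le_rpow_add hp32 η)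
  have hMt : 1 ≤ M * t ^ 2 := by
    calc 1 = t ^ (4 * r) * (p : ℝ) ^ η := hsave.symm
      _ ≤ t ^ 2 * M := mul_le_mul (pow_le_pow_of_le_one ht.le ht1 (by lia)) (hEq.trans hqM)
        (by positivity) (by positivity)
      _ = M * t ^ 2 := mul_comm _ _
  have hbudget : c ≤ (c * t ^ 2) ^ (2 * r) * (p : ℝ) ^ η := by
    calc c ≤ c ^ (2 * r) := le_self_pow₀ hc (by lia)
      _ = c ^ (2 * r) * (t ^ (4 * r) * (p : ℝ) ^ η) := by rw [hsave, mul_one]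
      _ = _ := by rw [mul_pow, ← pow_mul]; ring
  refine le_mul_of_sq_le_diagonal_add K.cast_nonneg M.cast_nonneg N.cast_nonneg ht.le
    (by linarith) hMt ?_
  refine norm_trilinearSum_sq_le_of_scale (D := D) hχ hα hβ (by lia) hr0.ne'
    (Real.one_le_rpow hp1 hη.le) (le_rpow_pow_of_one_div_le hp1 hη hr) hEq
    (mul_half_rpow_add_pow_five hp0 η) hqK hqM hqN hK hM hN (fun x hx hxp ↦ ?_)
    (one_add_log_le_mul_rpow hp1 hη) (by positivity) (hDc.trans hbudget)
  calc (#x.divisors : ℝ) ≤ D * (x : ℝ) ^ η := hD x (by lia)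
    _ ≤ D * (p : ℝ) ^ η := by gcongr

lemma exists_norm_trilinearSum_le {η : ℝ} (hη : 0 < η) :
    ∃ κ : ℝ, 0 < κ ∧ ∃ C : ℝ, 0 < C ∧ ∀ (p : ℕ) [Fact p.Prime],
      ∀ χ : MulChar (ZMod p) ℂ, χ ≠ 1 → ∀ α : ℕ → ℂ, (∀ m, ‖α m‖ ≤ 1) →
      ∀ β : ℕ → ℕ → ℂ, (∀ k n, ‖β k n‖ ≤ 1) → ∀ K M N : ℕ,
        (p : ℝ) ^ ((1 : ℝ) / 5 + η) / 2 ≤ K → K ^ 4 ≤ p →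
        (p : ℝ) ^ ((1 : ℝ) / 5 + η) / 2 ≤ M → M ^ 4 ≤ p →
        (p : ℝ) ^ ((1 : ℝ) / 5 + η) / 2 ≤ N → N ^ 4 ≤ p →
      ‖trilinearSum χ α β K M N‖ ≤ C * (K * M * N) * (p : ℝ) ^ (-κ) := by
  obtain ⟨D, hD1, hD⟩ := exists_card_divisors_le_mul_rpow hη
  set r := ⌈1 / η⌉₊
  have : 0 < r := Nat.ceil_pos.mpr (by positivity)
  set κ := η / (4 * r : ℕ)
  have hκ : 0 < κ := by positivity
  set b := 64 * D ^ 2 * (1 + 2 * (1 + 1 / η)) * momentConstant r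
  have hb : 0 ≤ b := mul_nonneg (by positivity) (momentConstant_nonneg r)
  refine ⟨κ, hκ, 2 * (1 + (1 + b)) + 32 ^ κ, by positivity, ?_⟩
  intro p hprime χ hχ α hα β hβ K M N hqK hK hqM hM hqN hN
  rcases le_or_gt 32 p with hp | hp
  · refine (norm_trilinearSum_le_of_large hη (by linarith) hD (Nat.le_ceil _)
      (le_add_of_nonneg_right hb) (le_add_of_nonneg_left zero_le_one) hp hχ hα hβ
      hqK hK hqM hM hqN hN).trans ?_
    gcongr
    exact le_add_of_nonneg_right (by positivity)
  · have hp0 : (0 : ℝ) < p := by exact_mod_cast hprime.out.pos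
    have hsmall : 1 ≤ (2 * (1 + (1 + b)) + 32 ^ κ) * (p : ℝ) ^ (-κ) := by
      rw [Real.rpow_neg hp0.le, ← div_eq_mul_inv, one_le_div (by positivity)]
      refine le_add_of_nonneg_of_le (by positivity) (Real.rpow_le_rpow hp0.le ?_ hκ.le)
      exact_mod_cast hp.le
    calc _ ≤ (K * M * N : ℝ) := norm_trilinearSum_le hα hβ K M N
      _ ≤ K * M * N * ((2 * (1 + (1 + b)) + 32 ^ κ) * (p : ℝ) ^ (-κ)) :=
        le_mul_of_one_le_right (by positivity) hsmall
      _ = _ := by ring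

lemma half_le_floor_and_floor_pow_four_le {p : ℕ} (hp : 0 < p) {η x : ℝ} (hη : 0 < η)
    (hlower : (p : ℝ) ^ ((1 : ℝ) / 5 + η) ≤ x) (hupper : x ≤ (p : ℝ) ^ ((1 : ℝ) / 4)) :
    (p : ℝ) ^ ((1 : ℝ) / 5 + η) / 2 ≤ ⌊x⌋₊ ∧ ⌊x⌋₊ ^ 4 ≤ p ∧ (⌊x⌋₊ : ℝ) ≤ x := by
  have hx1 : 1 ≤ x := (Real.one_le_rpow (by exact_mod_cast hp) (by positivity)).trans hlower
  have hfloor : (⌊x⌋₊ : ℝ) ≤ x := Nat.floor_le (by linarith)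
  refine ⟨by linarith [Nat.div_two_lt_floor hx1], ?_, hfloor⟩
  have hpow : (⌊x⌋₊ : ℝ) ^ 4 ≤ (p : ℝ) := by
    calc (⌊x⌋₊ : ℝ) ^ 4 ≤ ((p : ℝ) ^ ((1 : ℝ) / 4)) ^ 4 := by gcongr; exact hfloor.trans hupper
      _ = (p : ℝ) := by
        rw [← Real.rpow_natCast, ← Real.rpow_mul p.cast_nonneg]
        norm_num
  exact_mod_cast hpow

lemma ite_mulChar_eq_mul {F R : Type*} [Field F] [DecidableEq F] [CommRing R] (χ : MulChar F R)
    (x a b c d : F) :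
    (if a ≠ 0 ∧ b ≠ 0 ∧ c ≠ 0 ∧ d ≠ 0 then χ (x * (a * b⁻¹) * (c * d⁻¹)) else 0) =
      χ (a * b⁻¹) * χ (c * d⁻¹) * χ x := by
  split_ifs with h
  · simp only [map_mul]
    ring
  · have : a * b⁻¹ = 0 ∨ c * d⁻¹ = 0 := by
      simp only [mul_eq_zero, inv_eq_zero]
      tauto
    rcases this with h | h <;> rw [h, MulChar.map_zero] <;> simp

end PowerSaving

end TrilinearCharSum

open TrilinearCharSum in
theorem trilinear_rational_multiplicative_general {η : ℝ} (hη : 0 < η) :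
    ∃ κ : ℝ, 0 < κ ∧ ∃ C : ℝ, 0 < C ∧ ∀ p : ℕ, p.Prime →
      ∀ χ : MulChar (ZMod p) ℂ, χ ≠ 1 →
      ∀ α : ℕ → ℂ, (∀ m, ‖α m‖ ≤ 1) → ∀ β : ℕ → ℕ → ℂ, (∀ k n, ‖β k n‖ ≤ 1) →
      ∀ K M N : ℝ,
        (p : ℝ) ^ ((1 : ℝ) / 5 + η) ≤ K → K ≤ (p : ℝ) ^ ((1 : ℝ) / 4) →
        (p : ℝ) ^ ((1 : ℝ) / 5 + η) ≤ M → M ≤ (p : ℝ) ^ ((1 : ℝ) / 4) →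
        (p : ℝ) ^ ((1 : ℝ) / 5 + η) ≤ N → N ≤ (p : ℝ) ^ ((1 : ℝ) / 4) →
      ‖∑ k ∈ Icc 1 ⌊K⌋₊, ∑ m ∈ Icc 1 ⌊M⌋₊, ∑ n ∈ Icc 1 ⌊N⌋₊, α m * β k n * χ (k + m * n)‖ ≤
        C * (K * M * N) * (p : ℝ) ^ (-κ) := by
  obtain ⟨κ, hκ, C, hC, hbound⟩ := exists_norm_trilinearSum_le hη
  refine ⟨κ, hκ, C, hC, ?_⟩
  intro p hp χ hχ α hα β hβ K M N hK hK' hM hM' hN hN'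
  have : Fact p.Prime := ⟨hp⟩
  obtain ⟨hqK, hK4, hKle⟩ := half_le_floor_and_floor_pow_four_le hp.pos hη hK hK'
  obtain ⟨hqM, hM4, hMle⟩ := half_le_floor_and_floor_pow_four_le hp.pos hη hM hM'
  obtain ⟨hqN, hN4, hNle⟩ := half_le_floor_and_floor_pow_four_le hp.pos hη hN hN'
  have hK0 : 0 ≤ K := (Nat.cast_nonneg _).trans hKle
  have hM0 : 0 ≤ M := (Nat.cast_nonneg _).trans hMle
  refine (hbound p χ hχ α hα β hβ _ _ _ hqK hK4 hqM hM4 hqN hN4).trans ?_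
  gcongr

/-- Corollary 2.10, second bound (trilinear character sums twisted by rational
function values inside the multiplicative character). -/
theorem trilinear_rational_multiplicative (η : ℝ) (hη : 0 < η) (d₁ d₂ : ℕ)
    (hd₁ : 0 < d₁) (hd₂ : 0 < d₂) :
    ∃ κ : ℝ, 0 < κ ∧ ∃ C : ℝ, 0 < C ∧ ∀ (p : ℕ), p.Prime →
      ∀ (χ : MulChar (ZMod p) ℂ), χ ≠ 1 →
      ∀ (P₁ P₂ : Polynomial (ZMod p)), P₁ ≠ 0 → P₂ ≠ 0 →
        P₁.natDegree ≤ d₁ → P₂.natDegree ≤ d₁ →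
      ∀ (Q₁ Q₂ : MvPolynomial (Fin 2) (ZMod p)), Q₁ ≠ 0 → Q₂ ≠ 0 →
        Q₁.totalDegree ≤ d₂ → Q₂.totalDegree ≤ d₂ →
      ∀ (K M N : ℝ),
        (p : ℝ) ^ ((1 : ℝ) / 5 + η) ≤ K → K < (p : ℝ) ^ ((1 : ℝ) / 4 - η) →
        (p : ℝ) ^ ((1 : ℝ) / 5 + η) ≤ M → M < (p : ℝ) ^ ((1 : ℝ) / 4 - η) →
        (p : ℝ) ^ ((1 : ℝ) / 5 + η) ≤ N → N < (p : ℝ) ^ ((1 : ℝ) / 4 - η) →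
      ‖∑ k ∈ Icc 1 ⌊K⌋₊, ∑ m ∈ Icc 1 ⌊M⌋₊, ∑ n ∈ Icc 1 ⌊N⌋₊,
          if Polynomial.eval (m : ZMod p) P₁ ≠ 0 ∧ Polynomial.eval (m : ZMod p) P₂ ≠ 0 ∧
              MvPolynomial.eval ![(k : ZMod p), (n : ZMod p)] Q₁ ≠ 0 ∧
              MvPolynomial.eval ![(k : ZMod p), (n : ZMod p)] Q₂ ≠ 0 then
            χ (((k + m * n : ℕ) : ZMod p) *
              (Polynomial.eval (m : ZMod p) P₁ * (Polynomial.eval (m : ZMod p) P₂)⁻¹) *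
              (MvPolynomial.eval ![(k : ZMod p), (n : ZMod p)] Q₁ *
                (MvPolynomial.eval ![(k : ZMod p), (n : ZMod p)] Q₂)⁻¹))
          else 0‖ ≤ C * (K * M * N) * (p : ℝ) ^ (-κ) := by
  obtain ⟨κ, hκ, C, hC, hbound⟩ := trilinear_rational_multiplicative_general hη
  refine ⟨κ, hκ, C, hC, ?_⟩
  intro p hp χ hχ P₁ P₂ _ _ _ _ Q₁ Q₂ _ _ _ _ K M N hK hK' hM hM' hN hN'
  have : Fact p.Prime := ⟨hp⟩
  have hupper : (p : ℝ) ^ ((1 : ℝ) / 4 - η) ≤ (p : ℝ) ^ ((1 : ℝ) / 4) :=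
    Real.rpow_le_rpow_of_exponent_le (by exact_mod_cast hp.one_le) (by linarith)
  simp only [TrilinearCharSum.ite_mulChar_eq_mul, Nat.cast_add, Nat.cast_mul]
  exact hbound p hp χ hχ _ (fun _ ↦ DirichletCharacter.norm_le_one χ _) _
    (fun _ _ ↦ DirichletCharacter.norm_le_one χ _) K M N hK (hK'.le.trans hupper) hM
    (hM'.le.trans hupper) hN (hN'.le.trans hupper)
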